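/- arXiv:2006.04099 — 2 statements merged into one kernel-verified Lean document; each statement's English description precedes it below -/
import Mathlib

section
/- Let q be a prime power with q > 2 and let S be an algebraic hypersurface of PG(6,q^2) of degree q+1 defined over GF(q^2) which does not contain any solid (3-dimensional projective subspace). If the number of GF(q^2)-rational points of S equals q^11 + q^9 + q^7 + q^4 + q^2 + 1, then every solid of PG(6,q^2) meets S in at least q^4 + q^2 + 1 rational points. -/
open MvPolynomial Module

/-- The set of points of the projective subspace of `PG(n-1, F)` determined by
the linear subspace `W` of `F^n`. -/
def projPts {F : Type} [Field F] {n : ℕ} (W : Submodule F (Fin n → F)) :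
    Set (Projectivization F (Fin n → F)) :=
  {P | P.submodule ≤ W}

/-- The set of `F`-rational points of the hypersurface of `PG(n-1, F)` defined by the
homogeneous polynomial `f`. -/
def hypersurfacePts {F : Type} [Field F] {n : ℕ} (f : MvPolynomial (Fin n) F) :
    Set (Projectivization F (Fin n → F)) :=
  {P | MvPolynomial.eval P.rep f = 0}

/-!
Suppose that a solid `W` meets `S` in too few points. Projecting from a point of `W` off `S` shows
that `W` contains a line `ℓ` disjoint from `S` (Bose–Burton). A plane through `ℓ` cuts `S` in a
curve of degree `q + 1` whose affine part, the complement of `ℓ`, has no rational point at infinity.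

Such an affine curve has at most `q ^ 3` rational points. If it is reducible, count the points of
each component on the lines through one of them. If it is irreducible, use Stöhr–Voloch: since
`q = 0` in the field, the curve does not divide the polynomial expressing that the Frobenius image
of a point lies on its tangent line, and the two curves meet with multiplicity at least two at
each rational point.

Summing over the planes through `ℓ` not contained in `W` gives
`|S \ W| ≤ q ^ 7 (q ^ 4 + q ^ 2 + 1)`, which leaves at least `q ^ 4 + q ^ 2 + 1` points in `W`.
-/

section Lines

variable {σ R : Type*} [CommRing R]

/-- The restriction of a polynomial to the line `t ↦ a + t • v`, as a polynomial in `t`. -/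
noncomputable def restrictLine (a v : σ → R) : MvPolynomial σ R →ₐ[R] Polynomial R :=
  aeval fun i => Polynomial.C (a i) + Polynomial.C (v i) * Polynomial.X

lemma eval_restrictLine (a v : σ → R) (p : MvPolynomial σ R) (t : R) :
    (restrictLine a v p).eval t = eval (a + t • v) p := by
  have h : (Polynomial.aeval t).comp (restrictLine a v) = aeval (a + t • v) :=
    algHom_ext fun i => by simp [restrictLine, mul_comm t]
  simpa [aeval_eq_eval] using DFunLike.congr_fun h p

lemma natDegree_restrictLine_le (a v : σ → R) (p : MvPolynomial σ R) :
    (restrictLine a v p).natDegree ≤ p.totalDegree := by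
  rw [restrictLine]
  simpa using aeval_natDegree_le (n := 1) p le_rfl _ fun i => by compute_degree

lemma coeff_restrictLine_monomial (a v : σ → R) (s : σ →₀ ℕ) (c : R) :
    (restrictLine a v (monomial s c)).coeff s.degree = eval v (monomial s c) := by
  suffices h : (restrictLine a v (monomial s 1)).coeff s.degree = eval v (monomial s 1) by
    rw [← mul_one c, ← C_mul_monomial, ← algebraMap_eq, ← Algebra.smul_def, map_smul,
      Polynomial.coeff_smul, h, smul_eval, smul_eq_mul]
  have hdeg (s : σ →₀ ℕ) : (restrictLine a v (monomial s 1)).natDegree ≤ s.degree :=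
    (natDegree_restrictLine_le a v _).trans (totalDegree_monomial_le _ _)
  induction s using Finsupp.induction_linear with
  | zero => simp
  | add s t hs ht =>
    rw [← mul_one (1 : R), ← monomial_mul, map_mul, map_mul, map_add,
      Polynomial.coeff_mul_add_eq_of_natDegree_le (hdeg s) (hdeg t), hs, ht]
  | single i n =>
    have hX : (Polynomial.C (a i) + Polynomial.C (v i) * Polynomial.X).natDegree ≤ 1 := by
      compute_degree
    have hpow := Polynomial.coeff_pow_of_natDegree_le hX (m := n)
    simpa [← X_pow_eq_monomial, restrictLine] using hpow

lemma coeff_restrictLine {p : MvPolynomial σ R} {d : ℕ} (hp : p.totalDegree ≤ d) (a v : σ → R) :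
    (restrictLine a v p).coeff d = eval v (homogeneousComponent d p) := by
  rw [homogeneousComponent_apply, map_sum]
  conv_lhs => rw [p.as_sum, map_sum, Polynomial.finsetSum_coeff]
  rw [Finset.sum_filter]
  refine Finset.sum_congr rfl fun s hs => ?_
  split_ifs with hsd
  · rw [← hsd, coeff_restrictLine_monomial]
  · refine Polynomial.coeff_eq_zero_of_natDegree_lt ((natDegree_restrictLine_le _ _ _).trans_lt ?_)
    exact (totalDegree_monomial_le _ _).trans_lt
      (lt_of_le_of_ne ((le_totalDegree hs).trans hp) hsd)

lemma derivative_restrictLine [Fintype σ] (a v : σ → R)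
    (p : MvPolynomial σ R) :
    Polynomial.derivative (restrictLine a v p) =
      ∑ i, Polynomial.C (v i) * restrictLine a v (pderiv i p) := by
  classical
  induction p using MvPolynomial.induction_on with
  | C c => simp
  | add p r hp hr => simp [hp, hr, mul_add, Finset.sum_add_distrib]
  | mul_X p j hp =>
    have hj : Polynomial.derivative (restrictLine a v (X j)) = Polynomial.C (v j) := by
      simp [restrictLine]
    rw [map_mul, Polynomial.derivative_mul, hp, hj]
    simp [pderiv_X, Pi.single_apply, mul_add, Finset.sum_add_distrib, Finset.mul_sum, apply_ite,
      mul_comm, mul_left_comm, add_comm]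

lemma card_zeros_on_line_le [IsDomain R] [Fintype R] [DecidableEq R] {a v : σ → R}
    {p : MvPolynomial σ R} (hp : restrictLine a v p ≠ 0) :
    (Finset.univ.filter fun t : R => eval (a + t • v) p = 0).card ≤ p.totalDegree := by
  refine le_trans (Polynomial.card_le_degree_of_subset_roots fun t ht => ?_)
    (natDegree_restrictLine_le a v p)
  rw [Polynomial.mem_roots hp, Polynomial.IsRoot, eval_restrictLine]
  simpa using ht

end Lines

section LeadingForms

variable {σ R : Type*} [CommSemiring R]

lemma homogeneousComponent_mul {p r : MvPolynomial σ R} {a b : ℕ}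
    (hp : p.totalDegree ≤ a) (hr : r.totalDegree ≤ b) :
    homogeneousComponent (a + b) (p * r) =
      homogeneousComponent a p * homogeneousComponent b r := by
  classical
  ext s
  rw [coeff_homogeneousComponent, coeff_mul, coeff_mul]
  simp only [coeff_homogeneousComponent]
  split_ifs with hs
  · refine Finset.sum_congr rfl fun uv huv => ?_
    have hdeg : uv.1.degree + uv.2.degree = a + b := by
      rw [← hs, ← Finset.HasAntidiagonal.mem_antidiagonal.1 huv, map_add]
    by_cases hu : coeff uv.1 p = 0
    · simp [hu]
    by_cases hv : coeff uv.2 r = 0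
    · simp [hv]
    have hua : uv.1.degree ≤ a := (le_totalDegree (mem_support_iff.2 hu)).trans hp
    have hvb : uv.2.degree ≤ b := (le_totalDegree (mem_support_iff.2 hv)).trans hr
    rw [if_pos (by omega), if_pos (by omega)]
  · refine (Finset.sum_eq_zero fun uv huv => ?_).symm
    rw [← Finset.HasAntidiagonal.mem_antidiagonal.1 huv, map_add] at hs
    split_ifs <;> first | omega | simp

lemma homogeneousComponent_pderiv (p : MvPolynomial σ R) (i : σ) (d : ℕ) :
    homogeneousComponent d (pderiv i p) = pderiv i (homogeneousComponent (d + 1) p) := by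
  classical
  ext s
  simp [coeff_homogeneousComponent, coeff_pderiv]

lemma totalDegree_pderiv_le (p : MvPolynomial σ R) (i : σ) :
    (pderiv i p).totalDegree ≤ p.totalDegree - 1 := by
  conv_lhs => rw [p.as_sum, map_sum]
  refine totalDegree_finsetSum_le fun s hs => ?_
  exact (isHomogeneous_monomial (coeff s p) rfl).pderiv.totalDegree_le.trans
    (Nat.sub_le_sub_right (le_totalDegree hs) 1)

lemma eval_smul_of_isHomogeneous {p : MvPolynomial σ R} {d : ℕ} (hp : p.IsHomogeneous d)
    (c : R) (x : σ → R) : eval (c • x) p = c ^ d * eval x p := by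
  rw [eval_eq, eval_eq, Finset.mul_sum]
  refine Finset.sum_congr rfl fun s hs => ?_
  have hsd : ∑ i ∈ s.support, s i = d := (hp.degree_eq_sum_deg_support hs).symm
  simp only [Pi.smul_apply, smul_eq_mul, mul_pow, Finset.prod_mul_distrib,
    Finset.prod_pow_eq_pow_sum, hsd]
  ring

end LeadingForms

lemma homogeneousComponent_dvd_of_dvd {σ R : Type*} [CommRing R] [IsDomain R]
    {p r : MvPolynomial σ R} {d n : ℕ} (hp : p.totalDegree = d) (hr : r.totalDegree ≤ n)
    (hpr : p ∣ r) : homogeneousComponent d p ∣ homogeneousComponent n r := by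
  subst hp
  obtain ⟨k, rfl⟩ := hpr
  rcases eq_or_ne (p * k) 0 with h0 | h0
  · rw [h0, map_zero]
    exact dvd_zero _
  · rw [totalDegree_mul_of_isDomain (left_ne_zero_of_mul h0) (right_ne_zero_of_mul h0)] at hr
    obtain ⟨m, rfl⟩ := Nat.exists_eq_add_of_le hr
    rw [add_assoc, homogeneousComponent_mul le_rfl (Nat.le_add_right _ _)]
    exact dvd_mul_right _ _

lemma one_le_totalDegree {σ F : Type*} [Field F] {p : MvPolynomial σ F} (h0 : p ≠ 0)
    (hp : ¬ IsUnit p) : 1 ≤ p.totalDegree := by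
  rw [Nat.one_le_iff_ne_zero]
  contrapose! hp
  rw [totalDegree_eq_zero_iff_eq_C] at hp
  rw [hp, Ne, C_eq_zero] at h0
  rw [hp]
  exact (IsUnit.mk0 _ h0).map C

/-- A polynomial with no zero other than, possibly, the origin; for a form this says that its
projective zero locus has no rational point. -/
def IsAnisotropic {σ R : Type*} [CommSemiring R] (g : MvPolynomial σ R) : Prop :=
  ∀ x, x ≠ 0 → eval x g ≠ 0

lemma restrictLine_ne_zero {σ R : Type*} [CommRing R] {f : MvPolynomial σ R} {d : ℕ}
    (hfd : f.totalDegree ≤ d) (hf : IsAnisotropic (homogeneousComponent d f)) (a : σ → R)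
    {v : σ → R} (hv : v ≠ 0) : restrictLine a v f ≠ 0 := fun h0 => hf v hv <| by
  rw [← coeff_restrictLine hfd a, h0, Polynomial.coeff_zero]

lemma finrank_restrictTotalDegree {σ R : Type*} [Fintype σ] [CommRing R] [Nontrivial R] (D : ℕ) :
    finrank R (restrictTotalDegree σ R D) = (D + Fintype.card σ).choose (Fintype.card σ) := by
  classical
  have hset : {s : σ →₀ ℕ | (s.sum fun _ e => e) ≤ D} =
      ((Finset.range (D + 1)).biUnion (Finset.univ.finsuppAntidiag) : Finset (σ →₀ ℕ)) := by
    ext s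
    simp [Finsupp.sum_fintype]
  have hdisj : (Finset.range (D + 1) : Set ℕ).PairwiseDisjoint
      (Finset.univ.finsuppAntidiag : ℕ → Finset (σ →₀ ℕ)) := fun a _ b _ hab =>
    Finset.disjoint_left.2 fun s ha hb => hab <| by
      rw [← (Finset.mem_finsuppAntidiag.1 ha).1, (Finset.mem_finsuppAntidiag.1 hb).1]
  rw [restrictTotalDegree, finrank_eq_nat_card_basis (basisRestrictSupport R _), hset,
    Nat.card_coe_set_eq, Set.ncard_coe_finset, Finset.card_biUnion hdisj,
    ← Nat.sum_range_multichoose]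
  simp [Finset.card_finsuppAntidiag_nat_eq_multichoose]

lemma finrank_map_add_finrank_inf_ker {K V W : Type*} [DivisionRing K] [AddCommGroup V]
    [Module K V] [AddCommGroup W] [Module K W] (φ : V →ₗ[K] W) (U : Submodule K V)
    [Module.Finite K U] :
    finrank K (U.map φ) + finrank K ↥(U ⊓ LinearMap.ker φ) = finrank K U := by
  rw [← Submodule.map_comap_subtype, Submodule.finrank_map_subtype_eq, ← LinearMap.ker_domRestrict,
    ← LinearMap.range_domRestrict, LinearMap.finrank_range_add_finrank_ker]

section Bezout

variable {σ F A : Type*} [Field F]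

lemma exists_map_restrictTotalDegree_eq_top [AddCommGroup A] [Module F A] [Module.Finite F A]
    {Φ : MvPolynomial σ F →ₗ[F] A} (hΦ : Function.Surjective Φ) :
    ∃ k₀, ∀ k, k₀ ≤ k → (restrictTotalDegree σ F k).map Φ = ⊤ := by
  obtain ⟨s, hs⟩ := Module.Finite.fg_top (R := F) (M := A)
  choose g hg using hΦ
  refine ⟨s.sup fun x => (g x).totalDegree, fun k hk => top_unique ?_⟩
  rw [← hs, Submodule.span_le]
  refine fun x hx => ⟨g x, (mem_restrictTotalDegree _ _ _).2 ?_, hg x⟩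
  exact (Finset.le_sup (f := fun x => (g x).totalDegree) hx).trans hk

lemma finrank_map_mulLeft {f : MvPolynomial σ F} (hf : f ≠ 0)
    (V : Submodule F (MvPolynomial σ F)) :
    finrank F (V.map (LinearMap.mulLeft F f)) = finrank F V :=
  (Submodule.equivMapOfInjective _ (fun _ _ => mul_left_cancel₀ hf) V).finrank_eq.symm

lemma map_mulLeft_inf_map_mulLeft_le {f h : MvPolynomial σ F} (hf : f ≠ 0)
    (hfh : IsRelPrime f h) (k l : ℕ) :
    (restrictTotalDegree σ F l).map (LinearMap.mulLeft F f) ⊓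
        (restrictTotalDegree σ F (k + f.totalDegree)).map (LinearMap.mulLeft F h) ≤
      (restrictTotalDegree σ F k).map (LinearMap.mulLeft F (f * h)) := by
  rintro _ ⟨⟨p, -, rfl⟩, ⟨r, hr, hpr⟩⟩
  rw [LinearMap.mulLeft_apply, LinearMap.mulLeft_apply] at hpr
  obtain ⟨c, rfl⟩ : f ∣ r := hfh.dvd_of_dvd_mul_left ⟨p, hpr⟩
  refine ⟨c, ?_, by simp only [LinearMap.mulLeft_apply, ← hpr]; ring⟩
  rw [SetLike.mem_coe, mem_restrictTotalDegree] at hr ⊢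
  rcases eq_or_ne c 0 with rfl | hc
  · simp
  · rw [totalDegree_mul_of_isDomain hf hc] at hr
    omega

lemma map_mulLeft_restrictTotalDegree_le (f : MvPolynomial σ F) {k l : ℕ}
    (hkl : f.totalDegree + k ≤ l) :
    (restrictTotalDegree σ F k).map (LinearMap.mulLeft F f) ≤ restrictTotalDegree σ F l := by
  rintro _ ⟨p, hp, rfl⟩
  rw [SetLike.mem_coe, mem_restrictTotalDegree] at hp
  rw [mem_restrictTotalDegree]
  exact (totalDegree_mul f p).trans (by omega)

lemma choose_two_second_difference (k d e : ℕ) :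
    (k + d + e + 2).choose 2 + (k + 2).choose 2 =
      (k + e + 2).choose 2 + (k + d + 2).choose 2 + d * e := by
  apply Nat.cast_injective (R := ℚ)
  push_cast [Nat.cast_choose_two]
  ring

/-- Compare, in large degree, the dimension of the image of `Φ` with that of the part of its kernel
formed by the multiples of `f` plus the multiples of `h`. -/
theorem finrank_le_totalDegree_mul_totalDegree [CommRing A] [Algebra F A] [Module.Finite F A]
    {Φ : MvPolynomial (Fin 2) F →ₐ[F] A} (hΦ : Function.Surjective Φ)
    {f h : MvPolynomial (Fin 2) F} (hf : f ≠ 0) (hh : h ≠ 0) (hfh : IsRelPrime f h)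
    (hΦf : Φ f = 0) (hΦh : Φ h = 0) :
    finrank F A ≤ f.totalDegree * h.totalDegree := by
  obtain ⟨k, hk⟩ := exists_map_restrictTotalDegree_eq_top (Φ := Φ.toLinearMap) hΦ
  set d := f.totalDegree
  set e := h.totalDegree
  set V := restrictTotalDegree (Fin 2) F
  set M := (V (k + e)).map (LinearMap.mulLeft F f) with hM
  set N := (V (k + d)).map (LinearMap.mulLeft F h) with hN
  have hsup : M ⊔ N ≤ V (k + d + e) ⊓ LinearMap.ker Φ.toLinearMap := by
    refine le_inf (sup_le (map_mulLeft_restrictTotalDegree_le f (by omega))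
      (map_mulLeft_restrictTotalDegree_le h (by omega))) (sup_le ?_ ?_) <;>
    · rintro _ ⟨p, -, rfl⟩
      simp [hΦf, hΦh]
  have hinf : finrank F ↥(M ⊓ N) ≤ finrank F (V k) :=
    (Submodule.finrank_mono (map_mulLeft_inf_map_mulLeft_le hf hfh k _)).trans
      (finrank_map_mulLeft (mul_ne_zero hf hh) _).le
  have hdim (D : ℕ) : finrank F (V D) = (D + 2).choose 2 := by
    simpa using finrank_restrictTotalDegree (σ := Fin 2) (R := F) D
  have hMN := Submodule.finrank_sup_add_finrank_inf_eq M N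
  have hrank := finrank_map_add_finrank_inf_ker Φ.toLinearMap (V (k + d + e))
  rw [hk _ (by omega), finrank_top, hdim] at hrank
  rw [hM, hN, finrank_map_mulLeft hf, finrank_map_mulLeft hh, ← hM, ← hN, hdim, hdim] at hMN
  have hsup' := Submodule.finrank_mono hsup
  rw [hdim] at hinf
  have hchoose := choose_two_second_difference k d e
  omega

end Bezout

section DualNumbers

variable {σ R : Type*} [CommRing R]

/-- Evaluation at the `R[ε]`-valued point `P + ε τ`, i.e. at the tangent vector `τ` based
at `P`. -/
noncomputable def evalDual (P τ : σ → R) : MvPolynomial σ R →ₐ[R] DualNumber R :=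
  aeval fun i => TrivSqZeroExt.inl (P i) + TrivSqZeroExt.inr (τ i)

lemma evalDual_X (P τ : σ → R) (i : σ) :
    evalDual P τ (X i) = TrivSqZeroExt.inl (P i) + TrivSqZeroExt.inr (τ i) := by
  simp [evalDual]

lemma fst_evalDual (P τ : σ → R) (p : MvPolynomial σ R) :
    (evalDual P τ p).fst = eval P p := by
  have h : (TrivSqZeroExt.fstHom R R R).comp (evalDual P τ) = aeval P :=
    algHom_ext fun i => by simp [evalDual_X]
  simpa [aeval_eq_eval] using DFunLike.congr_fun h p

lemma snd_evalDual [Fintype σ] (P τ : σ → R) (p : MvPolynomial σ R) :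
    (evalDual P τ p).snd = ∑ i, τ i * eval P (pderiv i p) := by
  classical
  induction p using MvPolynomial.induction_on with
  | C a => simp [TrivSqZeroExt.algebraMap_eq_inl]
  | add p r hp hr => simp [hp, hr, mul_add, Finset.sum_add_distrib]
  | mul_X p j hp =>
    rw [map_mul, TrivSqZeroExt.snd_mul, hp, fst_evalDual, evalDual_X]
    simp [pderiv_X, Pi.single_apply, mul_add, Finset.sum_add_distrib, Finset.mul_sum, apply_ite,
      mul_comm, mul_left_comm]

variable {F : Type*} [Field F]

lemma evalDual_surjective (P : σ → F) {τ : σ → F} (hτ : τ ≠ 0) :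
    Function.Surjective (evalDual P τ) := by
  obtain ⟨i, hi⟩ := Function.ne_iff.1 hτ
  refine fun z => ⟨C z.fst + C (z.snd / τ i) * (X i - C (P i)), ?_⟩
  have hi : τ i ≠ 0 := hi
  ext <;> simp [TrivSqZeroExt.algebraMap_eq_inl, evalDual_X, mul_div_cancel₀ _ hi]

lemma isCoprime_ker_evalDual {P P' : σ → F} (hP : P ≠ P') (τ τ' : σ → F) :
    IsCoprime (RingHom.ker (evalDual P τ)) (RingHom.ker (evalDual P' τ')) := by
  obtain ⟨i, hi⟩ := Function.ne_iff.1 hP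
  have hker (P τ : σ → F) : (X i - C (P i)) ^ 2 ∈ RingHom.ker (evalDual P τ) := by
    rw [RingHom.mem_ker]
    ext <;> simp [TrivSqZeroExt.algebraMap_eq_inl, evalDual_X, sq]
  have hlin : IsCoprime (X i - C (P i)) (X i - C (P' i) : MvPolynomial σ F) := by
    refine ⟨-C (P i - P' i)⁻¹, C (P i - P' i)⁻¹, ?_⟩
    have hC : (C (P i - P' i)⁻¹ * C (P i - P' i) : MvPolynomial σ F) = 1 := by
      rw [← C_mul, inv_mul_cancel₀ (sub_ne_zero.2 hi), C_1]
    rw [C_sub] at hC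
    linear_combination hC
  obtain ⟨a, b, hab⟩ := hlin.pow (m := 2) (n := 2)
  exact Ideal.isCoprime_iff_exists.2
    ⟨_, Ideal.mul_mem_left _ a (hker P τ), _, Ideal.mul_mem_left _ b (hker P' τ'), hab⟩

lemma pi_evalDual_surjective {ι : Type*} [Finite ι] {P τ : ι → σ → F}
    (hP : Function.Injective P) (hτ : ∀ x, τ x ≠ 0) :
    Function.Surjective (AlgHom.pi fun x => evalDual (P x) (τ x)) := by
  intro w
  choose p hp using fun x => evalDual_surjective (P x) (hτ x) (w x)
  obtain ⟨r, hr⟩ := Ideal.exists_forall_sub_mem_ideal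
    (I := fun x => RingHom.ker (evalDual (P x) (τ x)))
    (fun x y hxy => isCoprime_ker_evalDual (hP.ne hxy) _ _) p
  refine ⟨r, funext fun x => ?_⟩
  have hx := hr x
  rw [RingHom.mem_ker, map_sub, sub_eq_zero, hp] at hx
  exact hx

instance : Module.Finite F (DualNumber F) := inferInstanceAs (Module.Finite F (F × F))

lemma finrank_dualNumber : finrank F (DualNumber F) = 2 :=
  (finrank_prod (R := F) (M := F) (M' := F)).trans (by simp)

end DualNumbers

lemma exists_ne_zero_sum_mul_eq_zero {R : Type*} [CommRing R] [Nontrivial R] (c : Fin 2 → R) :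
    ∃ τ : Fin 2 → R, τ ≠ 0 ∧ ∑ i, τ i * c i = 0 := by
  rcases eq_or_ne c 0 with rfl | hc
  · exact ⟨1, one_ne_zero, by simp⟩
  · refine ⟨![-c 1, c 0], fun h => hc ?_, by simp [mul_comm]⟩
    ext i
    fin_cases i
    · simpa using congrFun h 1
    · simpa using congrFun h 0

section Frobenius

variable {σ F : Type*} [Field F] [Fintype F]

lemma evalDual_X_pow_card_sub_X (P τ : σ → F) (i : σ) :
    evalDual P τ (X i ^ Fintype.card F - X i) = -TrivSqZeroExt.inr (τ i) := by
  ext <;> simp [evalDual_X, FiniteField.pow_card, TrivSqZeroExt.snd_pow]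

lemma totalDegree_X_pow_card_sub_X_le (i : σ) :
    (X i ^ Fintype.card F - X i : MvPolynomial σ F).totalDegree ≤ Fintype.card F := by
  refine (totalDegree_sub _ _).trans (max_le (by simp) ?_)
  simp [Nat.one_le_iff_ne_zero]

lemma homogeneousComponent_X_pow_card_sub_X (i : σ) :
    homogeneousComponent (Fintype.card F) (X i ^ Fintype.card F - X i : MvPolynomial σ F) =
      X i ^ Fintype.card F := by
  rw [map_sub, homogeneousComponent_of_mem (isHomogeneous_X_pow i _),
    homogeneousComponent_of_mem (isHomogeneous_X F i), if_pos rfl,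
    if_neg Fintype.one_lt_card.ne', sub_zero]

variable [Fintype σ]

/-- The Stöhr–Voloch polynomial of `f`: it vanishes at a point `P` of the curve `f = 0`, over any
extension of `F`, when the image of `P` under the `|F|`-Frobenius lies on the tangent line at
`P`. -/
noncomputable def frobeniusPolar (f : MvPolynomial σ F) : MvPolynomial σ F :=
  ∑ i, (X i ^ Fintype.card F - X i) * pderiv i f

lemma evalDual_frobeniusPolar (P τ : σ → F) (f : MvPolynomial σ F) :
    evalDual P τ (frobeniusPolar f) = -TrivSqZeroExt.inr (evalDual P τ f).snd := by
  rw [frobeniusPolar, map_sum, snd_evalDual, TrivSqZeroExt.inr_sum, ← Finset.sum_neg_distrib]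
  refine Finset.sum_congr rfl fun i _ => ?_
  rw [map_mul, evalDual_X_pow_card_sub_X]
  ext <;> simp [-TrivSqZeroExt.inr_mul_inr, fst_evalDual, mul_comm]

lemma totalDegree_frobeniusPolar_le (f : MvPolynomial σ F) :
    (frobeniusPolar f).totalDegree ≤ Fintype.card F + (f.totalDegree - 1) :=
  totalDegree_finsetSum_le fun i _ => (totalDegree_mul _ _).trans
    (add_le_add (totalDegree_X_pow_card_sub_X_le i) (totalDegree_pderiv_le f i))

lemma homogeneousComponent_frobeniusPolar {f : MvPolynomial σ F} {d : ℕ}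
    (hf : f.totalDegree ≤ d + 1) :
    homogeneousComponent (Fintype.card F + d) (frobeniusPolar f) =
      ∑ i, X i ^ Fintype.card F * pderiv i (homogeneousComponent (d + 1) f) := by
  rw [frobeniusPolar, map_sum]
  refine Finset.sum_congr rfl fun i _ => ?_
  rw [homogeneousComponent_mul (totalDegree_X_pow_card_sub_X_le i)
    ((totalDegree_pderiv_le f i).trans (by omega)), homogeneousComponent_X_pow_card_sub_X,
    homogeneousComponent_pderiv]

end Frobenius

section AnisotropicForms

variable {F : Type*} [Field F] [Fintype F]

lemma isCoprime_X_pow_card_sub_X {p : Polynomial F} (hp : ∀ a, p.eval a ≠ 0) :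
    IsCoprime p (Polynomial.X ^ Fintype.card F - Polynomial.X) := by
  have hsplit : (∏ a : F, (Polynomial.X - Polynomial.C a)) =
      Polynomial.X ^ Fintype.card F - Polynomial.X := by
    have hmonic : (Polynomial.X ^ Fintype.card F - Polynomial.X : Polynomial F).Monic :=
      Polynomial.monic_X_pow_sub (by
        rw [Polynomial.degree_X]; exact_mod_cast Fintype.one_lt_card)
    have hprod := Polynomial.prod_multiset_X_sub_C_of_monic_of_roots_card_eq hmonic (by
      rw [FiniteField.roots_X_pow_card_sub_X,
        FiniteField.X_pow_card_sub_X_natDegree_eq F Fintype.one_lt_card]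
      rfl)
    rwa [FiniteField.roots_X_pow_card_sub_X] at hprod
  rw [← hsplit]
  refine IsCoprime.prod_right fun a _ => isCoprime_comm.1 ?_
  rw [(Polynomial.irreducible_X_sub_C a).coprime_iff_not_dvd, Polynomial.dvd_iff_isRoot]
  exact hp a

lemma not_dvd_sum_X_pow_card_mul_pderiv {g : MvPolynomial (Fin 2) F} {d : ℕ}
    (hg : g.IsHomogeneous d) (hd : (d : F) ≠ 0) (hg0 : IsAnisotropic g) :
    ¬ g ∣ ∑ i, X i ^ Fintype.card F * pderiv i g := by
  rintro ⟨k, hk⟩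
  set φ := restrictLine (![1, 0] : Fin 2 → F) ![0, 1]
  have hφX : φ (X 0) = 1 ∧ φ (X 1) = Polynomial.X := by simp [φ, restrictLine]
  have hderiv : Polynomial.derivative (φ g) = φ (pderiv 1 g) := by
    simp [φ, derivative_restrictLine]
  have heuler := congrArg φ hg.sum_X_mul_pderiv
  have hφk := congrArg φ hk
  simp only [Fin.sum_univ_two, map_add, map_mul, map_pow, map_natCast, hφX, one_pow, one_mul,
    nsmul_eq_mul, ← hderiv] at heuler hφk
  -- Euler's identity eliminates the derivative with respect to the other variable.
  have hdvd : φ g ∣ (Polynomial.X ^ Fintype.card F - Polynomial.X) *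
      Polynomial.derivative (φ g) :=
    ⟨φ k - d, by linear_combination hφk - heuler⟩
  have hcop : IsCoprime (φ g) (Polynomial.X ^ Fintype.card F - Polynomial.X) :=
    isCoprime_X_pow_card_sub_X fun a => by
      rw [eval_restrictLine]
      exact hg0 _ fun h => by simpa using congrFun h 0
  have hzero := Polynomial.dvd_derivative_iff.1 (hcop.dvd_of_dvd_mul_left hdvd)
  have hcoeff : (φ g).coeff d ≠ 0 := by
    rw [coeff_restrictLine hg.totalDegree_le, homogeneousComponent_of_mem hg, if_pos rfl]
    exact hg0 _ fun h => by simpa using congrFun h 1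
  obtain ⟨e, rfl⟩ := Nat.exists_eq_succ_of_ne_zero (n := d) (by rintro rfl; simp at hd)
  have hderiv_coeff : (φ g).coeff (e + 1) * (e + 1 : F) = 0 := by
    rw [← Polynomial.coeff_derivative, hzero, Polynomial.coeff_zero]
  exact mul_ne_zero hcoeff (by exact_mod_cast hd) hderiv_coeff

lemma not_dvd_frobeniusPolar {f : MvPolynomial (Fin 2) F} {d : ℕ} (hfd : f.totalDegree = d + 1)
    (hd : ((d + 1 : ℕ) : F) ≠ 0) (hf : IsAnisotropic (homogeneousComponent (d + 1) f)) :
    ¬ f ∣ frobeniusPolar f := fun hdvd => by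
  have hlead := homogeneousComponent_dvd_of_dvd hfd (totalDegree_frobeniusPolar_le f) hdvd
  rw [hfd, Nat.add_sub_cancel, homogeneousComponent_frobeniusPolar hfd.le] at hlead
  exact not_dvd_sum_X_pow_card_mul_pderiv (homogeneousComponent_isHomogeneous _ f) hd hf hlead

/-- Imposing the vanishing of `f` and of its Frobenius polar along one tangent direction at each
rational point gives two conditions per point. -/
theorem two_mul_card_zeros_le {f : MvPolynomial (Fin 2) F} (hirr : Irreducible f)
    {d : ℕ} (hfd : f.totalDegree = d + 1) (hd : ((d + 1 : ℕ) : F) ≠ 0)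
    (hf : IsAnisotropic (homogeneousComponent (d + 1) f)) :
    2 * Nat.card {x // eval x f = 0} ≤ (d + 1) * (Fintype.card F + d) := by
  classical
  choose τ hτ0 hτ using fun x : {x // eval x f = 0} =>
    exists_ne_zero_sum_mul_eq_zero fun i => eval x.1 (pderiv i f)
  have hndvd := not_dvd_frobeniusPolar hfd hd hf
  have hΦf (x : {x // eval x f = 0}) : evalDual x.1 (τ x) f = 0 := by
    ext
    · rw [fst_evalDual, x.2, TrivSqZeroExt.fst_zero]
    · rw [snd_evalDual, hτ, TrivSqZeroExt.snd_zero]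
  have hbezout := finrank_le_totalDegree_mul_totalDegree
    (pi_evalDual_surjective Subtype.val_injective hτ0) hirr.ne_zero
    (fun h => hndvd (by rw [h]; exact dvd_zero f)) (hirr.isRelPrime_iff_not_dvd.2 hndvd)
    (funext hΦf) (funext fun x => by simp [evalDual_frobeniusPolar, hΦf])
  rw [finrank_pi_fintype] at hbezout
  simp only [finrank_dualNumber, Finset.sum_const, smul_eq_mul, Finset.card_univ] at hbezout
  rw [mul_comm 2, Nat.card_eq_fintype_card]
  rw [hfd] at hbezout
  refine hbezout.trans (Nat.mul_le_mul_left _ ((totalDegree_frobeniusPolar_le f).trans ?_))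
  rw [hfd, Nat.add_sub_cancel]

end AnisotropicForms

lemma card_zeros_mul_le {σ R : Type*} [CommRing R] [IsDomain R] [Finite R] [Finite σ]
    (p r : MvPolynomial σ R) :
    Nat.card {x // eval x (p * r) = 0} ≤
      Nat.card {x // eval x p = 0} + Nat.card {x // eval x r = 0} := by
  simp only [map_mul, mul_eq_zero]
  exact Set.ncard_union_le {x | eval x p = 0} {x | eval x r = 0}

section PlaneCurves

variable {σ F : Type*} [Field F] [Fintype F]

/-- Counting incidences of zeros with the lines through the zero `a`. -/
lemma card_zeros_erase_mul_le [Fintype σ] [DecidableEq σ] [DecidableEq F] {p : MvPolynomial σ F}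
    {a : σ → F} (ha : eval a p = 0) (hp : ∀ v, v ≠ 0 → restrictLine a v p ≠ 0) :
    ((Finset.univ.filter fun x => eval x p = 0).erase a).card * (Fintype.card F - 1) ≤
      (Fintype.card F ^ Fintype.card σ - 1) * (p.totalDegree - 1) := by
  let directions : Finset (σ → F) := Finset.univ.erase 0
  let params : Finset F := Finset.univ.erase 0
  have hcount := Finset.sum_card_bipartiteAbove_eq_sum_card_bipartiteBelow
    (s := directions) (t := params) fun v t => eval (a + t • v) p = 0
  have hline (v : σ → F) (hv : v ∈ directions) :
      (params.bipartiteAbove (fun v t => eval (a + t • v) p = 0) v).card ≤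
        p.totalDegree - 1 := by
    rw [Finset.bipartiteAbove, Finset.filter_erase, Finset.card_erase_of_mem (by simp [ha])]
    exact Nat.sub_le_sub_right (card_zeros_on_line_le (hp v (Finset.ne_of_mem_erase hv))) 1
  have hscale (t : F) (ht : t ∈ params) :
      (directions.bipartiteBelow (fun v t => eval (a + t • v) p = 0) t).card =
        ((Finset.univ.filter fun x => eval x p = 0).erase a).card := by
    have ht0 : t ≠ 0 := Finset.ne_of_mem_erase ht
    refine Finset.card_bij' (fun v _ => a + t • v) (fun x _ => t⁻¹ • (x - a)) ?_ ?_ ?_ ?_ <;>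
      simp +contextual [Finset.bipartiteBelow, directions, ht0, sub_eq_zero]
  rw [Finset.sum_congr rfl hscale] at hcount
  have hle := hcount ▸ Finset.sum_le_card_nsmul _ _ _ hline
  simpa [directions, params, Finset.card_erase_of_mem, mul_comm] using hle

lemma card_zeros_le_of_restrictLine_ne_zero {p : MvPolynomial (Fin 2) F}
    (hp : ∀ a v, v ≠ 0 → restrictLine a v p ≠ 0) :
    Nat.card {x // eval x p = 0} ≤ (p.totalDegree - 1) * (Fintype.card F + 1) + 1 := by
  classical
  rcases isEmpty_or_nonempty {x // eval x p = 0} with hempty | ⟨a, ha⟩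
  · simp
  have hpencil := card_zeros_erase_mul_le ha (hp a)
  have hfactor : Fintype.card F ^ 2 - 1 = (Fintype.card F + 1) * (Fintype.card F - 1) := by
    simpa using Nat.sq_sub_sq (Fintype.card F) 1
  rw [Fintype.card_fin, hfactor, mul_right_comm] at hpencil
  have hle := Nat.le_of_mul_le_mul_right hpencil (Nat.sub_pos_of_lt Fintype.one_lt_card)
  rw [Finset.card_erase_of_mem (by simpa using ha), ← Fintype.card_subtype,
    ← Nat.card_eq_fintype_card, mul_comm] at hle
  omega

lemma card_zeros_le_of_not_irreducible {f : MvPolynomial (Fin 2) F} {d : ℕ}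
    (hfd : f.totalDegree = d + 1) (hf : IsAnisotropic (homogeneousComponent (d + 1) f))
    (hred : ¬ Irreducible f) :
    Nat.card {x // eval x f = 0} ≤ (d - 1) * (Fintype.card F + 1) + 2 := by
  have hunit : ¬ IsUnit f := fun h => by
    rw [isUnit_iff_totalDegree_of_isReduced] at h
    omega
  obtain ⟨p, r, rfl, hp, hr⟩ : ∃ p r, f = p * r ∧ ¬ IsUnit p ∧ ¬ IsUnit r := by
    simpa [irreducible_iff, hunit] using hred
  have hpr : p * r ≠ 0 := fun h => by simp [h] at hfd
  have hp1 := one_le_totalDegree (left_ne_zero_of_mul hpr) hp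
  have hr1 := one_le_totalDegree (right_ne_zero_of_mul hpr) hr
  have hline (a v : Fin 2 → F) (hv : v ≠ 0) := restrictLine_ne_zero hfd.le hf a hv
  simp only [map_mul, mul_ne_zero_iff] at hline
  have hcard := (card_zeros_mul_le p r).trans <| add_le_add
    (card_zeros_le_of_restrictLine_ne_zero fun a v hv => (hline a v hv).1)
    (card_zeros_le_of_restrictLine_ne_zero fun a v hv => (hline a v hv).2)
  rw [totalDegree_mul_of_isDomain (left_ne_zero_of_mul hpr) (right_ne_zero_of_mul hpr)] at hfd
  have hd : d - 1 = (p.totalDegree - 1) + (r.totalDegree - 1) := by omega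
  rw [hd, add_mul]
  omega

theorem card_zeros_le_cube {q : ℕ} (hq : 2 < q) (hcard : Fintype.card F = q ^ 2)
    {f : MvPolynomial (Fin 2) F} (hfd : f.totalDegree ≤ q + 1)
    (hf : IsAnisotropic (homogeneousComponent (q + 1) f)) :
    Nat.card {x // eval x f = 0} ≤ q ^ 3 := by
  have hdeg : f.totalDegree = q + 1 := hfd.antisymm <| not_lt.1 fun hlt => hf 1 one_ne_zero <| by
    rw [homogeneousComponent_eq_zero _ _ hlt, map_zero]
  by_cases hirr : Irreducible f
  · have hq0 : (q : F) = 0 := by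
      have h := Nat.cast_card_eq_zero F
      rw [hcard, Nat.cast_pow] at h
      exact pow_eq_zero_iff two_ne_zero |>.1 h
    have h := two_mul_card_zeros_le hirr hdeg (by simp [hq0]) hf
    rw [hcard] at h
    nlinarith
  · have h := card_zeros_le_of_not_irreducible hdeg hf hirr
    rw [hcard] at h
    obtain ⟨m, rfl⟩ := Nat.exists_eq_add_of_lt hq
    simp only [Nat.add_sub_cancel] at h
    nlinarith

end PlaneCurves

section AffineSubstitution

variable {σ ι R : Type*} [Fintype ι] [CommRing R]

/-- Substitution of the affine parametrization `x ↦ b + ∑ j, x j • u j`. -/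
noncomputable def affineSubst (b : σ → R) (u : ι → σ → R) :
    MvPolynomial σ R →ₐ[R] MvPolynomial ι R :=
  aeval fun i => C (b i) + ∑ j, C (u j i) * X j

lemma eval_affineSubst (b : σ → R) (u : ι → σ → R) (p : MvPolynomial σ R) (x : ι → R) :
    eval x (affineSubst b u p) = eval (b + ∑ j, x j • u j) p := by
  have h : (aeval x).comp (affineSubst b u) = aeval (b + ∑ j, x j • u j) :=
    algHom_ext fun i => by simp [affineSubst, mul_comm]
  simpa [aeval_eq_eval] using DFunLike.congr_fun h p

lemma totalDegree_affineSubst_le (b : σ → R) (u : ι → σ → R) (p : MvPolynomial σ R) :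
    (affineSubst b u p).totalDegree ≤ p.totalDegree := by
  have hlin (i : σ) : (C (b i) + ∑ j, C (u j i) * X j).totalDegree ≤ 1 :=
    (totalDegree_add _ _).trans <| max_le (by simp) <| totalDegree_finsetSum_le fun j _ =>
      (isHomogeneous_C_mul_X _ _).totalDegree_le
  conv_lhs => rw [p.as_sum, map_sum]
  refine totalDegree_finsetSum_le fun s hs => le_trans ?_ (le_totalDegree hs)
  rw [affineSubst, aeval_monomial, algebraMap_eq]
  refine (totalDegree_mul _ _).trans ?_
  rw [totalDegree_C, zero_add, Finsupp.prod, Finsupp.sum]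
  refine (totalDegree_finsetProd _ _).trans (Finset.sum_le_sum fun i _ => ?_)
  exact (totalDegree_pow _ _).trans ((Nat.mul_le_mul_left _ (hlin i)).trans_eq (mul_one _))

lemma restrictLine_affineSubst (b : σ → R) (u : ι → σ → R) (p : MvPolynomial σ R) (x : ι → R) :
    restrictLine 0 x (affineSubst b u p) = restrictLine b (∑ j, x j • u j) p := by
  have h : (restrictLine 0 x).comp (affineSubst b u) = restrictLine b (∑ j, x j • u j) :=
    algHom_ext fun i => by
      simp [affineSubst, restrictLine, Finset.sum_mul, ← mul_assoc, mul_comm (x _)]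
  exact DFunLike.congr_fun h p

lemma eval_homogeneousComponent_affineSubst {p : MvPolynomial σ R} {d : ℕ}
    (hp : p.totalDegree ≤ d) (b : σ → R) (u : ι → σ → R) (x : ι → R) :
    eval x (homogeneousComponent d (affineSubst b u p)) =
      eval (∑ j, x j • u j) (homogeneousComponent d p) := by
  rw [← coeff_restrictLine ((totalDegree_affineSubst_le b u p).trans hp) 0,
    restrictLine_affineSubst, coeff_restrictLine hp]

end AffineSubstitution

section Cosets

variable {σ F : Type*} [Field F] [Fintype F]

theorem card_coset_zeros_le_cube {q : ℕ} (hq : 2 < q) (hcard : Fintype.card F = q ^ 2)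
    {f : MvPolynomial σ F} (hf : f.IsHomogeneous (q + 1)) {U : Submodule F (σ → F)}
    (hU : finrank F U = 2) (hUf : ∀ u ∈ U, u ≠ 0 → eval u f ≠ 0) (b : σ → F) :
    Nat.card {u : U // eval (b + u.1) f = 0} ≤ q ^ 3 := by
  have : FiniteDimensional F U := .of_finrank_pos (by omega)
  set e := finBasisOfFinrankEq F U hU
  set u : Fin 2 → σ → F := fun j => (e j).1
  have hsum (x : Fin 2 → F) : ∑ j, x j • u j = (e.equivFun.symm x).1 := by
    simp [u, e.equivFun_symm_apply]
  have htop : IsAnisotropic (homogeneousComponent (q + 1) (affineSubst b u f)) := fun x hx => by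
    rw [eval_homogeneousComponent_affineSubst hf.totalDegree_le, homogeneousComponent_of_mem hf,
      if_pos rfl, hsum]
    exact hUf _ (e.equivFun.symm x).2
      (by rwa [Ne, Submodule.coe_eq_zero, LinearEquiv.map_eq_zero_iff])
  have hplane := card_zeros_le_cube hq hcard
    ((totalDegree_affineSubst_le b u f).trans hf.totalDegree_le) htop
  simp only [eval_affineSubst, hsum] at hplane
  rwa [← Nat.card_congr (e.equivFun.symm.toEquiv.subtypeEquiv fun x => Iff.rfl)]

/-- Average over the cosets of `U` in the complement of `W`. -/
lemma card_mul_card_zeros_diff_le [Finite σ] {q : ℕ} (hq : 2 < q)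
    (hcard : Fintype.card F = q ^ 2) {f : MvPolynomial σ F} (hf : f.IsHomogeneous (q + 1))
    {U W : Submodule F (σ → F)} (hUW : U ≤ W) (hU : finrank F U = 2)
    (hUf : ∀ u ∈ U, u ≠ 0 → eval u f ≠ 0) :
    Nat.card U * Nat.card {v // eval v f = 0 ∧ v ∉ W} ≤ Nat.card {v // v ∉ W} * q ^ 3 := by
  classical
  have := Fintype.ofFinite σ
  have hcount := Finset.sum_card_bipartiteAbove_eq_sum_card_bipartiteBelow
    (s := Finset.univ.filter (· ∉ W)) (t := (Finset.univ : Finset U))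
    fun v u => eval (v + u.1) f = 0
  have hcoset (v : σ → F) (_ : v ∈ Finset.univ.filter (· ∉ W)) :
      ((Finset.univ : Finset U).bipartiteAbove (fun v u => eval (v + u.1) f = 0) v).card ≤
        q ^ 3 := by
    rw [Finset.bipartiteAbove, ← Fintype.card_subtype, ← Nat.card_eq_fintype_card]
    exact card_coset_zeros_le_cube hq hcard hf hU hUf v
  have htranslate (u : U) (_ : u ∈ Finset.univ) :
      ((Finset.univ.filter (· ∉ W)).bipartiteBelow (fun v u => eval (v + u.1) f = 0)
        u).card = Nat.card {v // eval v f = 0 ∧ v ∉ W} := by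
    rw [Nat.card_eq_fintype_card, Fintype.card_subtype]
    have huW : u.1 ∈ W := hUW u.2
    refine Finset.card_bij' (fun v _ => v + u.1) (fun v _ => v - u.1) ?_ ?_ ?_ ?_ <;>
      simp +contextual [Finset.bipartiteBelow, W.add_mem_iff_left huW, W.sub_mem_iff_left huW]
  rw [Finset.sum_congr rfl htranslate] at hcount
  have hle := hcount ▸ Finset.sum_le_card_nsmul _ _ _ hcoset
  simpa [Nat.card_eq_fintype_card, Fintype.card_subtype] using hle

end Cosets

section ProjectiveCounting

open scoped LinearAlgebra.Projectivization

variable {K V : Type*} [Field K] [AddCommGroup V] [Module K V]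

lemma card_subtype_mk_mem (A : Set (ℙ K V)) :
    Nat.card {v : {v : V // v ≠ 0} // Projectivization.mk K v.1 v.2 ∈ A} =
      A.ncard * (Nat.card K - 1) := by
  have e : {v : {v : V // v ≠ 0} // Projectivization.mk K v.1 v.2 ∈ A} ≃
      {P : ℙ K V × Kˣ // P.1 ∈ A} :=
    (Projectivization.nonZeroEquivProjectivizationProdUnits K V).subtypeEquiv fun v => Iff.rfl
  rw [Nat.card_congr (e.trans (Equiv.prodSubtypeFstEquivSubtypeProd (p := (· ∈ A)))),
    Nat.card_prod, Nat.card_units, Nat.card_coe_set_eq]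

lemma card_subtype_notMem [Finite V] (W : Submodule K V) :
    Nat.card {v // v ∉ W} = Nat.card W * (Nat.card (ℙ K (V ⧸ W)) * (Nat.card K - 1)) := by
  have hcompl : Nat.card {v // v ∉ W} + Nat.card W = Nat.card V := by
    rw [add_comm]
    exact Set.ncard_add_ncard_compl (W : Set V)
  rw [← Projectivization.card, Nat.mul_sub_one, ← Submodule.card_eq_card_quotient_mul_card,
    ← hcompl, Nat.add_sub_cancel]

lemma eq_mk_of_mem_submodule {P : ℙ K V} {v : V} (hv : v ≠ 0) (hvP : v ∈ P.submodule) :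
    P = Projectivization.mk K v hv := by
  refine Projectivization.submodule_injective (Eq.symm ?_)
  have := Module.finite_of_finrank_pos (R := K) (M := P.submodule) (by simp [P.finrank_submodule])
  apply Submodule.eq_of_le_of_finrank_eq
  · rwa [Projectivization.submodule_mk, Submodule.span_singleton_le_iff_mem]
  · simp only [Projectivization.finrank_submodule]

/-- Project from a point outside `Z`: some point of the quotient is missed by the image of `Z`. -/
theorem exists_finrank_eq_two_forall_not_submodule_le [Finite K] {m : ℕ}
    (hV : finrank K V = m + 1) {Z : Set (ℙ K V)}
    (hZ : Z.ncard < ∑ i ∈ Finset.range m, Nat.card K ^ i) :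
    ∃ U : Submodule K V, finrank K U = 2 ∧ ∀ P ∈ Z, ¬ P.submodule ≤ U := by
  have : FiniteDimensional K V := .of_finrank_pos (by omega)
  have : Finite V := Module.finite_of_finite K
  obtain ⟨P₀, hP₀⟩ : ∃ P₀, P₀ ∉ Z := by
    by_contra! hall
    rw [Set.eq_univ_of_forall hall, Set.ncard_univ, Projectivization.card_of_finrank K V hV,
      Finset.sum_range_succ] at hZ
    omega
  obtain ⟨R, hR⟩ : ∃ R : ℙ K (V ⧸ P₀.submodule),
      ∀ P ∈ Z, ¬ P.submodule ≤ R.submodule.comap P₀.submodule.mkQ := by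
    by_contra! hall
    choose p hpZ hp using hall
    have hinj : Function.Injective fun R => (⟨p R, hpZ R⟩ : Z) := fun R R' hRR' => by
      have hpp : p R = p R' := congrArg Subtype.val hRR'
      have hrep (R) : P₀.submodule.mkQ (p R).rep ∈ R.submodule := hp R <| by
        rw [Projectivization.submodule_eq]
        exact Submodule.mem_span_singleton_self _
      have hne : P₀.submodule.mkQ (p R).rep ≠ 0 := fun h => hP₀ <| by
        rw [Submodule.mkQ_apply, Submodule.Quotient.mk_eq_zero] at h
        rw [eq_mk_of_mem_submodule (p R).rep_nonzero h, Projectivization.mk_rep]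
        exact hpZ R
      exact (eq_mk_of_mem_submodule hne (hrep R)).trans
        (eq_mk_of_mem_submodule hne (hpp ▸ hrep R')).symm
    have hcard := Nat.card_le_card_of_injective _ hinj
    have hquot : finrank K (V ⧸ P₀.submodule) = m := by
      have h := P₀.submodule.finrank_quotient_add_finrank
      rw [P₀.finrank_submodule] at h
      omega
    rw [Projectivization.card_of_finrank K _ hquot, Nat.card_coe_set_eq] at hcard
    omega
  refine ⟨_, ?_, hR⟩
  have hrank := finrank_map_add_finrank_inf_ker P₀.submodule.mkQ
    (R.submodule.comap P₀.submodule.mkQ)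
  rw [Submodule.map_comap_eq_of_surjective (Submodule.mkQ_surjective _), Submodule.ker_mkQ,
    inf_eq_right.2 (Submodule.le_comap_mkQ _ _), R.finrank_submodule,
    P₀.finrank_submodule] at hrank
  exact hrank.symm

end ProjectiveCounting

section Hypersurfaces

variable {F : Type} [Field F] {n : ℕ}

lemma mk_mem_hypersurfacePts {f : MvPolynomial (Fin n) F} {d : ℕ} (hf : f.IsHomogeneous d)
    {v : Fin n → F} (hv : v ≠ 0) :
    Projectivization.mk F v hv ∈ hypersurfacePts f ↔ eval v f = 0 := by
  obtain ⟨a, ha⟩ := Projectivization.exists_smul_eq_mk_rep F v hv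
  rw [hypersurfacePts, Set.mem_ofPred_eq, ← ha, Units.smul_def, eval_smul_of_isHomogeneous hf]
  simp

lemma mk_mem_projPts {W : Submodule F (Fin n → F)} {v : Fin n → F} (hv : v ≠ 0) :
    Projectivization.mk F v hv ∈ projPts W ↔ v ∈ W := by
  rw [projPts, Set.mem_ofPred_eq, Projectivization.submodule_mk,
    Submodule.span_singleton_le_iff_mem]

lemma exists_external_line [Finite F] {f : MvPolynomial (Fin n) F} {d m : ℕ}
    (hf : f.IsHomogeneous d) {W : Submodule F (Fin n → F)} (hW : finrank F W = m + 1)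
    (hlt : (hypersurfacePts f ∩ projPts W).ncard < ∑ i ∈ Finset.range m, Nat.card F ^ i) :
    ∃ U ≤ W, finrank F U = 2 ∧ ∀ u ∈ U, u ≠ 0 → eval u f ≠ 0 := by
  set ι := Projectivization.map W.subtype W.injective_subtype with hι
  have hle : (ι ⁻¹' hypersurfacePts f).ncard ≤ (hypersurfacePts f ∩ projPts W).ncard := by
    refine Set.ncard_le_ncard_of_injOn ι (fun P hP => ⟨hP, ?_⟩)
      (Projectivization.map_injective _ _).injOn
    induction P using Projectivization.ind with | h v hv =>
    rw [hι, Projectivization.map_mk, mk_mem_projPts]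
    exact v.2
  obtain ⟨U, hU, hUZ⟩ := exists_finrank_eq_two_forall_not_submodule_le hW (hle.trans_lt hlt)
  refine ⟨U.map W.subtype, Submodule.map_subtype_le _ _, ?_, ?_⟩
  · rw [Submodule.finrank_map_subtype_eq, hU]
  · rintro _ ⟨u, hu, rfl⟩ hu0 hfu
    have hu0' : u ≠ 0 := by rintro rfl; exact hu0 rfl
    refine hUZ (Projectivization.mk F u hu0') ?_ ?_
    · rwa [Set.mem_preimage, hι, Projectivization.map_mk, mk_mem_hypersurfacePts hf]
    · rwa [Projectivization.submodule_mk, Submodule.span_singleton_le_iff_mem]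

theorem mul_ncard_hypersurfacePts_diff_le [Fintype F] {q : ℕ} (hq : 2 < q)
    (hcard : Fintype.card F = q ^ 2) {f : MvPolynomial (Fin n) F}
    (hf : f.IsHomogeneous (q + 1)) {U W : Submodule F (Fin n → F)} (hUW : U ≤ W)
    (hU : finrank F U = 2) (hUf : ∀ u ∈ U, u ≠ 0 → eval u f ≠ 0) :
    q * (hypersurfacePts f \ projPts W).ncard ≤
      Nat.card W * Nat.card (Projectivization F ((Fin n → F) ⧸ W)) := by
  have hcone : Nat.card {v // eval v f = 0 ∧ v ∉ W} =
      (hypersurfacePts f \ projPts W).ncard * (q ^ 2 - 1) := by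
    rw [← hcard, ← Nat.card_eq_fintype_card, ← card_subtype_mk_mem]
    have hne (v : Fin n → F) (hv : eval v f = 0 ∧ v ∉ W) : v ≠ 0 :=
      fun h => hv.2 (h ▸ W.zero_mem)
    refine Nat.card_congr ((Equiv.subtypeSubtypeEquivSubtype (hne _)).symm.trans
      (Equiv.subtypeEquivRight fun v => ?_))
    rw [Set.mem_sdiff, mk_mem_hypersurfacePts hf, mk_mem_projPts]
  have hcount := card_mul_card_zeros_diff_le hq hcard hf hUW hU hUf
  have hUcard : Nat.card U = q ^ 4 := by
    rw [Module.natCard_eq_pow_finrank (K := F), hU, Nat.card_eq_fintype_card, hcard, ← pow_mul]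
  rw [hcone, card_subtype_notMem, Nat.card_eq_fintype_card (α := F), hcard, hUcard] at hcount
  have hpos : 0 < q ^ 3 * (q ^ 2 - 1) := by
    have := Nat.one_lt_pow two_ne_zero (by omega : 1 < q)
    have := Nat.sub_pos_of_lt this
    positivity
  refine Nat.le_of_mul_le_mul_right (c := q ^ 3 * (q ^ 2 - 1)) ?_ hpos
  convert hcount using 1 <;> ring

theorem stmt_0_general [Fintype F] {q m : ℕ} (hq2 : 2 < q) (hcardF : Fintype.card F = q ^ 2)
    {f : MvPolynomial (Fin n) F} (hfdeg : f.IsHomogeneous (q + 1))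
    {W : Submodule F (Fin n → F)} (hW : finrank F W = m + 1)
    (hS : q ^ (2 * m + 1) * ∑ i ∈ Finset.range (n - (m + 1)), (q ^ 2) ^ i +
      ∑ i ∈ Finset.range m, (q ^ 2) ^ i ≤ (hypersurfacePts f).ncard) :
    ∑ i ∈ Finset.range m, (q ^ 2) ^ i ≤ (hypersurfacePts f ∩ projPts W).ncard := by
  have hcard : Nat.card F = q ^ 2 := by rw [Nat.card_eq_fintype_card, hcardF]
  by_contra! hlt
  obtain ⟨U, hUW, hU, hUf⟩ := exists_external_line hfdeg hW (by rwa [hcard])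
  have hout := mul_ncard_hypersurfacePts_diff_le hq2 hcardF hfdeg hUW hU hUf
  have hquot : finrank F ((Fin n → F) ⧸ W) = n - (m + 1) := by
    rw [Submodule.finrank_quotient, finrank_fin_fun, hW]
  rw [Projectivization.card_of_finrank F _ hquot, Module.natCard_eq_pow_finrank (K := F), hW,
    hcard, show (q ^ 2) ^ (m + 1) = q * q ^ (2 * m + 1) by ring, mul_assoc] at hout
  have hle := Nat.le_of_mul_le_mul_left hout (by omega)
  have hsplit := Set.ncard_inter_add_ncard_sdiff_eq_ncard (hypersurfacePts f) (projPts W)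
  omega

end Hypersurfaces

/-- If `q > 2` is a prime power and `S` is a hypersurface of `PG(6,q²)` of degree `q+1`
defined over `GF(q²)`, containing no solid, with `q^11+q^9+q^7+q^4+q^2+1` rational points,
then every solid meets `S` in at least `q^4+q^2+1` rational points. -/
theorem stmt_0 (q : ℕ) (hq : ∃ p k : ℕ, p.Prime ∧ 0 < k ∧ q = p ^ k) (hq2 : 2 < q)
    (F : Type) [Field F] [Fintype F] (hcardF : Fintype.card F = q ^ 2)
    (f : MvPolynomial (Fin 7) F) (hf0 : f ≠ 0) (hfdeg : f.IsHomogeneous (q + 1))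
    (S : Set (Projectivization F (Fin 7 → F))) (hS : S = hypersurfacePts f)
    (hnosolid : ¬ ∃ W : Submodule F (Fin 7 → F), Module.finrank F W = 4 ∧ projPts W ⊆ S)
    (hcardS : S.ncard = q ^ 11 + q ^ 9 + q ^ 7 + q ^ 4 + q ^ 2 + 1) :
    ∀ W : Submodule F (Fin 7 → F), Module.finrank F W = 4 →
      q ^ 4 + q ^ 2 + 1 ≤ (S ∩ projPts W).ncard := by
  intro W hW
  refine hS ▸ (stmt_0_general (m := 3) hq2 hcardF hfdeg hW (hS ▸ hcardS.ge.trans' ?_)).trans' ?_ <;>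
    norm_num [Finset.sum_range_succ] <;> linarith
end

section
/- Let q be a prime power with q > 2 and let S be an algebraic hypersurface of PG(6,q^2) of degree q+1 defined over GF(q^2), not containing any solid, whose number of GF(q^2)-rational points equals q^11 + q^9 + q^7 + q^4 + q^2 + 1. If there exists at least one solid Sigma_3 of PG(6,q^2) such that |Sigma_3 ∩ S| = q^4 + q^2 + 1, then S is a non-singular Hermitian variety H(6,q^2) of PG(6,q^2). -/
open MvPolynomial Module

/-- `S` is a non-singular Hermitian variety of `PG(n-1, q²)`: the set of points `⟨v⟩`
with `vᵀ M v^(q) = 0` for an invertible matrix `M` with `Mᵀ` the entrywise `q`-th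
power of `M`. -/
def IsNonsingularHermitian (q : ℕ) {F : Type} [Field F] {n : ℕ}
    (S : Set (Projectivization F (Fin n → F))) : Prop :=
  ∃ M : Matrix (Fin n) (Fin n) F, IsUnit M.det ∧ M.transpose = M.map (· ^ q) ∧
    S = {P | ∑ i, ∑ j, P.rep i * M i j * (P.rep j) ^ q = 0}

/-!
Let `W` be the given subspace, of vector dimension `m + 1`. If the form `f` had no nontrivial zero
on a line of `W`, then by the Stöhr–Voloch bound there would be fewer than `q ^ 3` zeros among the
`q ^ 4` vectors of each coset of that line, whereas a proportion `1 / q` of the vectors off `W` are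
zeros. So the zeros meet every line of `W`, and by Bose–Burton they form a hyperplane `E` of `W`.

No coset of `E` off `W` has a proportion of zeros exceeding `1 / q`, so equality holds on each. In
an affine plane inside `u + E` the zeros then form `q` parallel lines, so `f (u + a)` depends only
on `λ = differential f a u`. Letting `u` run through a pencil gives `f (u + a) = f u + λ + c λ ^ q`
with `c` independent of `u`. As this has zeros, a multiple of `f` takes values in the subfield of
order `q` off `W`, hence everywhere. Comparing coefficients on lines, the form `differential f x y`
of this multiple is Hermitian, and its values at the pairs `(x, x)` are those of the multiple.
-/

namespace HermitianVariety

section LineRestriction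

variable {R σ : Type*} [CommRing R] {f g : MvPolynomial σ R} {d : ℕ}

/-- The restriction `f (x + T y)` of `f` to the line through `x` with direction `y`, as a
polynomial in the parameter `T`. -/
noncomputable def lineRestriction (f : MvPolynomial σ R) (x y : σ → R) : Polynomial R :=
  aeval (fun i => Polynomial.C (x i) + Polynomial.C (y i) * Polynomial.X) f

lemma lineRestriction_add (f g : MvPolynomial σ R) (x y : σ → R) :
    lineRestriction (f + g) x y = lineRestriction f x y + lineRestriction g x y :=
  map_add _ f g

lemma lineRestriction_mul (f g : MvPolynomial σ R) (x y : σ → R) :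
    lineRestriction (f * g) x y = lineRestriction f x y * lineRestriction g x y :=
  map_mul _ f g

lemma lineRestriction_X (i : σ) (x y : σ → R) :
    lineRestriction (X i) x y = Polynomial.C (x i) + Polynomial.C (y i) * Polynomial.X :=
  aeval_X _ i

lemma lineRestriction_smul (f : MvPolynomial σ R) (x y : σ → R) (c : R) :
    lineRestriction f x (c • y) =
      (lineRestriction f x y).comp (Polynomial.C c * Polynomial.X) := by
  rw [Polynomial.comp_eq_aeval, lineRestriction, lineRestriction, comp_aeval_apply]
  congr 2
  ext1 i
  simp [mul_assoc, mul_comm c, mul_left_comm]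

lemma eval_lineRestriction (f : MvPolynomial σ R) (x y : σ → R) (t : R) :
    (lineRestriction f x y).eval t = eval (x + t • y) f := by
  rw [lineRestriction, ← Polynomial.coe_aeval_eq_eval, comp_aeval_apply, ← aeval_eq_eval]
  congr 2
  ext i
  simp [mul_comm t]

lemma natDegree_lineRestriction_le (hf : f.totalDegree ≤ d) (x y : σ → R) :
    (lineRestriction f x y).natDegree ≤ d :=
  mul_one d ▸ aeval_natDegree_le f hf _ fun i => by compute_degree

lemma coeff_zero_lineRestriction (f : MvPolynomial σ R) (x y : σ → R) :
    (lineRestriction f x y).coeff 0 = eval x f := by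
  simp [Polynomial.coeff_zero_eq_eval_zero, eval_lineRestriction]

lemma coeff_aeval_one_X_comm {B : MvPolynomial (Fin 2) R} (hB : B.IsHomogeneous d) {k : ℕ}
    (hk : k ≤ d) :
    (aeval ![1, Polynomial.X] B : Polynomial R).coeff k =
      (aeval ![Polynomial.X, 1] B : Polynomial R).coeff (d - k) := by
  simp only [aeval_def, eval₂_eq', Fin.prod_univ_two, Polynomial.finsetSum_coeff]
  refine Finset.sum_congr rfl fun e he => ?_
  have hdeg : d = e 0 + e 1 := by
    rw [hB.degree_eq_sum_deg_support he, ← Finsupp.degree_apply, Finsupp.degree_eq_sum,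
      Fin.sum_univ_two]
  have hexp : k = e 1 ↔ d - k = e 0 := by omega
  simp [Polynomial.coeff_X_pow, hexp]

lemma coeff_lineRestriction_comm (hf : f.IsHomogeneous d) (x y : σ → R) {k : ℕ} (hk : k ≤ d) :
    (lineRestriction f x y).coeff k = (lineRestriction f y x).coeff (d - k) := by
  let B : MvPolynomial (Fin 2) R := aeval (fun i => C (x i) * X 0 + C (y i) * X 1) f
  have hB : B.IsHomogeneous d := one_mul d ▸ hf.aeval _ fun i =>
    (isHomogeneous_C_mul_X _ _).add (isHomogeneous_C_mul_X _ _)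
  have hxy : lineRestriction f x y = aeval ![1, Polynomial.X] B := by
    rw [comp_aeval_apply]
    simp [lineRestriction, Polynomial.C_eq_algebraMap]
  have hyx : lineRestriction f y x = aeval ![Polynomial.X, 1] B := by
    rw [comp_aeval_apply]
    simp [lineRestriction, Polynomial.C_eq_algebraMap, add_comm]
  rw [hxy, hyx, coeff_aeval_one_X_comm hB hk]

lemma coeff_top_lineRestriction (hf : f.IsHomogeneous d) (x y : σ → R) :
    (lineRestriction f x y).coeff d = eval y f := by
  rw [coeff_lineRestriction_comm hf x y le_rfl, Nat.sub_self, coeff_zero_lineRestriction]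

lemma lineRestriction_ne_zero (hf : f.IsHomogeneous d) (x : σ → R) {y : σ → R}
    (hy : eval y f ≠ 0) : lineRestriction f x y ≠ 0 := fun h =>
  hy (by rw [← coeff_top_lineRestriction hf x, h, Polynomial.coeff_zero])

lemma exists_totalDegree_le_eval_eq_coeff_lineRestriction (hf : f.IsHomogeneous d) (y : σ → R)
    (m : ℕ) :
    ∃ p : MvPolynomial σ R, p.totalDegree ≤ d - m ∧
      ∀ x, eval x p = (lineRestriction f x y).coeff m := by
  let P : MvPolynomial (Option σ) R := aeval (fun i => X (some i) + C (y i) * X none) f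
  have hP : P.totalDegree ≤ d := by
    have : P.IsHomogeneous (1 * d) := hf.aeval _ fun i =>
      (isHomogeneous_X _ _).add (isHomogeneous_C_mul_X _ _)
    simpa using this.totalDegree_le
  refine ⟨(optionEquivLeft R σ P).coeff m, ?_, fun x => ?_⟩
  · by_cases hm : m ≤ P.totalDegree
    · have := totalDegree_coeff_optionEquivLeft_add_le R σ P m hm
      omega
    · rw [Polynomial.coeff_eq_zero_of_natDegree_lt, totalDegree_zero]
      · exact Nat.zero_le _
      · rw [natDegree_optionEquivLeft]
        exact (degreeOf_le_totalDegree P none).trans_lt (not_le.1 hm)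
  · rw [← Polynomial.coeff_map]
    congr 1
    let φ : Polynomial (MvPolynomial σ R) →ₐ[R] Polynomial R := Polynomial.mapAlgHom (aeval x)
    change φ (optionEquivLeft R σ P) = _
    rw [← AlgEquiv.coe_toAlgHom, ← AlgHom.comp_apply, comp_aeval_apply, lineRestriction]
    congr 2
    ext i
    simp [φ]

lemma eval_smul_of_isHomogeneous (hf : f.IsHomogeneous d) (t : R) (x : σ → R) :
    eval (t • x) f = t ^ d * eval x f := by
  simp only [eval_eq, Finset.mul_sum]
  refine Finset.sum_congr rfl fun e he => ?_
  simp only [Pi.smul_apply, smul_eq_mul, mul_pow, Finset.prod_mul_distrib,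
    Finset.prod_pow_eq_pow_sum, ← hf.degree_eq_sum_deg_support he]
  ring

end LineRestriction

section Differential

variable {R σ : Type*} [CommRing R] [Fintype σ] {f : MvPolynomial σ R} {d : ℕ}

/-- The differential of `f` at `x`, as a linear form. -/
noncomputable def differential (f : MvPolynomial σ R) (x : σ → R) : (σ → R) →ₗ[R] R :=
  ∑ i, eval x (pderiv i f) • LinearMap.proj i

lemma differential_apply (f : MvPolynomial σ R) (x y : σ → R) :
    differential f x y = ∑ i, eval x (pderiv i f) * y i := by
  simp [differential]

lemma differential_add (f g : MvPolynomial σ R) (x : σ → R) :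
    differential (f + g) x = differential f x + differential g x := by
  simp [differential, add_smul, Finset.sum_add_distrib]

lemma differential_mul (f g : MvPolynomial σ R) (x : σ → R) :
    differential (f * g) x = eval x f • differential g x + eval x g • differential f x := by
  simp [differential, add_smul, mul_smul, Finset.sum_add_distrib, Finset.smul_sum]

lemma differential_C (c : R) (x : σ → R) : differential (C c) x = 0 := by
  simp [differential]

lemma differential_X (i : σ) (x : σ → R) : differential (X i) x = LinearMap.proj i := by
  classical
  simp [differential, pderiv_X, Pi.single_apply, apply_ite (eval x), ite_smul]

lemma differential_smul (c : R) (f : MvPolynomial σ R) (x : σ → R) :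
    differential (c • f) x = c • differential f x := by
  simp [smul_eq_C_mul, differential_mul, differential_C]

lemma derivative_lineRestriction (f : MvPolynomial σ R) (x y : σ → R) :
    Polynomial.derivative (lineRestriction f x y) =
      ∑ i, Polynomial.C (y i) * lineRestriction (pderiv i f) x y := by
  classical
  induction f using MvPolynomial.induction_on with
  | C a => simp [lineRestriction]
  | add p r hp hr => simp [lineRestriction_add, hp, hr, mul_add, Finset.sum_add_distrib]
  | mul_X p i hp =>
    have hX : ∑ j, Polynomial.C (y j) * lineRestriction (pderiv j (X i)) x y =
        Polynomial.C (y i) := by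
      simp [lineRestriction, pderiv_X, Pi.single_apply, apply_ite (aeval _), mul_ite]
    simp only [lineRestriction_mul, Polynomial.derivative_mul, hp, Derivation.leibniz, smul_eq_mul,
      lineRestriction_add, mul_add, Finset.sum_add_distrib, Finset.sum_mul]
    have hder : Polynomial.derivative (lineRestriction (X i) x y) = Polynomial.C (y i) := by
      simp [lineRestriction_X]
    rw [hder, ← hX, Finset.mul_sum, add_comm]
    simp only [mul_left_comm, mul_right_comm, mul_assoc]

lemma coeff_one_lineRestriction (f : MvPolynomial σ R) (x y : σ → R) :
    (lineRestriction f x y).coeff 1 = differential f x y := by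
  have h := Polynomial.coeff_derivative (lineRestriction f x y) 0
  rw [derivative_lineRestriction] at h
  simpa [Polynomial.finsetSum_coeff, coeff_zero_lineRestriction, differential_apply, mul_comm]
    using h.symm

lemma coeff_lineRestriction_eq_differential (hf : f.IsHomogeneous (d + 1)) (x y : σ → R) :
    (lineRestriction f x y).coeff d = differential f y x := by
  rw [coeff_lineRestriction_comm hf x y d.le_succ, Nat.add_sub_cancel_left,
    coeff_one_lineRestriction]

lemma differential_self (hf : f.IsHomogeneous d) (x : σ → R) :
    differential f x x = d * eval x f := by
  simpa [differential_apply, mul_comm] using congrArg (eval x) hf.sum_X_mul_pderiv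

lemma differential_smul_point (hf : f.IsHomogeneous (d + 1)) (c : R) (x : σ → R) :
    differential f (c • x) = c ^ d • differential f x := by
  ext y
  simp [differential_apply, eval_smul_of_isHomogeneous hf.pderiv, Finset.mul_sum, mul_assoc]

end Differential

section Counting

variable {A B : Type*} [Finite A] [Finite B] {e : B → Equiv.Perm A} {s T : Set A} {k : ℕ}

lemma finsum_ncard_setOf_perm_mem (hT : ∀ a b, e b a ∈ s → a ∈ T) :
    ∑ᶠ a ∈ T, {b | e b a ∈ s}.ncard = Nat.card B * s.ncard := by
  classical
  have := Fintype.ofFinite A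
  have := Fintype.ofFinite B
  calc ∑ᶠ a ∈ T, {b | e b a ∈ s}.ncard
      = ∑ a ∈ T.toFinset, (Finset.univ.bipartiteAbove (fun a b => e b a ∈ s) a).card := by
        rw [finsum_mem_eq_toFinset_sum]
        refine Finset.sum_congr rfl fun a _ => ?_
        rw [← Set.ncard_coe_finset, Finset.coe_bipartiteAbove]
        simp
    _ = ∑ b : B, (T.toFinset.bipartiteBelow (fun a b => e b a ∈ s) b).card :=
        Finset.sum_card_bipartiteAbove_eq_sum_card_bipartiteBelow _
    _ = ∑ _b : B, s.ncard := by
        refine Finset.sum_congr rfl fun b _ => ?_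
        have hpre : {a | a ∈ T.toFinset ∧ e b a ∈ s} = e b ⁻¹' s :=
          Set.ext fun a => and_iff_right_of_imp fun h => Set.mem_toFinset.2 (hT a b h)
        rw [← Set.ncard_coe_finset, Finset.coe_bipartiteBelow, hpre,
          Set.ncard_preimage_of_injective_subset_range (e b).injective (by simp)]
    _ = Nat.card B * s.ncard := by simp

lemma card_mul_ncard_le (hT : ∀ a b, e b a ∈ s → a ∈ T)
    (hk : ∀ a ∈ T, {b | e b a ∈ s}.ncard ≤ k) : Nat.card B * s.ncard ≤ T.ncard * k := by
  classical
  have := Fintype.ofFinite A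
  rw [← finsum_ncard_setOf_perm_mem hT, finsum_mem_eq_toFinset_sum, Set.ncard_eq_toFinset_card',
    ← smul_eq_mul]
  exact Finset.sum_le_card_nsmul _ _ _ fun a ha => hk a (Set.mem_toFinset.1 ha)

lemma ncard_setOf_perm_mem_eq (hT : ∀ a b, e b a ∈ s → a ∈ T)
    (hk : ∀ a ∈ T, {b | e b a ∈ s}.ncard ≤ k) (h : Nat.card B * s.ncard = T.ncard * k) {a : A}
    (ha : a ∈ T) : {b | e b a ∈ s}.ncard = k := by
  classical
  have := Fintype.ofFinite A
  refine (Finset.sum_eq_sum_iff_of_le fun a ha => hk a (Set.mem_toFinset.1 ha)).1 ?_ a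
    (Set.mem_toFinset.2 ha)
  rw [← finsum_mem_eq_toFinset_sum, finsum_ncard_setOf_perm_mem hT, h, Finset.sum_const,
    smul_eq_mul, Set.ncard_eq_toFinset_card']

end Counting

section Roots

variable {F : Type*} [Field F]

lemma ncard_setOf_eval_eq_zero_le {P : Polynomial F} (hP : P ≠ 0) :
    {t : F | P.eval t = 0}.ncard ≤ P.natDegree := by
  classical
  have : {t : F | P.eval t = 0} = P.roots.toFinset := by ext; simp [hP]
  rw [this, Set.ncard_coe_finset]
  exact P.roots.toFinset_card_le.trans P.card_roots'

end Roots

section FrobeniusTangent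

variable {F σ : Type*} [Field F] [Fintype F] [Fintype σ] {f : MvPolynomial σ F} {d : ℕ}

/-- The polynomial `∑ i, Xᵢ ^ |F| * ∂f/∂Xᵢ` of the Stöhr–Voloch method. Over the algebraic closure
it vanishes at a point `P` of the hypersurface `f = 0` if and only if the tangent space at `P`
contains the image of `P` under the Frobenius map of `F`. -/
noncomputable def frobeniusTangent (f : MvPolynomial σ F) : MvPolynomial σ F :=
  ∑ i, X i ^ Fintype.card F * pderiv i f

lemma isHomogeneous_frobeniusTangent (hf : f.IsHomogeneous (d + 1)) :
    (frobeniusTangent f).IsHomogeneous (Fintype.card F + d) :=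
  IsHomogeneous.sum _ _ _ fun _ _ => (isHomogeneous_X_pow _ _).mul hf.pderiv

lemma lineRestriction_frobeniusTangent (hf : f.IsHomogeneous d) (x y : σ → F) :
    lineRestriction (frobeniusTangent f) x y = (d : Polynomial F) * lineRestriction f x y +
      (Polynomial.X ^ Fintype.card F - Polynomial.X) *
        Polynomial.derivative (lineRestriction f x y) := by
  have hpow : ∀ i, lineRestriction (X i : MvPolynomial σ F) x y ^ Fintype.card F =
      lineRestriction (X i) x y +
        (Polynomial.X ^ Fintype.card F - Polynomial.X) * Polynomial.C (y i) := fun i => by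
    rw [← FiniteField.expand_card, lineRestriction_X]
    simp only [map_add, map_mul, Polynomial.expand_C, Polynomial.expand_X]
    ring
  have heuler : ∑ i, lineRestriction (X i) x y * lineRestriction (pderiv i f) x y =
      (d : Polynomial F) * lineRestriction f x y := by
    simpa [lineRestriction] using congrArg (lineRestriction · x y) hf.sum_X_mul_pderiv
  calc lineRestriction (frobeniusTangent f) x y
      = ∑ i, lineRestriction (X i) x y ^ Fintype.card F * lineRestriction (pderiv i f) x y := by
        simp only [frobeniusTangent, lineRestriction, map_sum, map_mul, map_pow]
    _ = _ := by
        simp only [hpow, derivative_lineRestriction, add_mul, Finset.sum_add_distrib, heuler,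
          Finset.mul_sum, mul_assoc]

lemma eval_frobeniusTangent (hf : f.IsHomogeneous d) (x : σ → F) :
    eval x (frobeniusTangent f) = d * eval x f := by
  rw [← coeff_zero_lineRestriction _ x 0, lineRestriction_frobeniusTangent hf,
    ← coeff_zero_lineRestriction f x 0]
  simp [Polynomial.mul_coeff_zero, Fintype.card_ne_zero.symm]

lemma differential_frobeniusTangent (hf : f.IsHomogeneous (d + 1)) (x : σ → F) :
    differential (frobeniusTangent f) x = (d : F) • differential f x := by
  ext y
  rw [← coeff_one_lineRestriction, lineRestriction_frobeniusTangent hf, LinearMap.smul_apply,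
    ← coeff_one_lineRestriction]
  simp [sub_mul, add_mul, Polynomial.coeff_X_pow_mul', Polynomial.coeff_derivative,
    Fintype.one_lt_card.not_ge]

lemma not_dvd_frobeniusTangent (hf : f.IsHomogeneous (d + 1)) (hd : (d : F) = 0) {x y : σ → F}
    (hy : eval y f ≠ 0) (hx : ∀ t : F, eval (x + t • y) f ≠ 0) : ¬ f ∣ frobeniusTangent f := by
  rintro ⟨g, hg⟩
  set u := lineRestriction f x y with hu
  have hdvd : u ∣ (Polynomial.X ^ Fintype.card F - Polynomial.X) * Polynomial.derivative u := by
    rw [← dvd_add_right (dvd_mul_left u ((d + 1 : ℕ) : Polynomial F)),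
      ← lineRestriction_frobeniusTangent hf, hg, lineRestriction_mul]
    exact dvd_mul_right _ _
  have hcop : IsCoprime u (Polynomial.X ^ Fintype.card F - Polynomial.X) := by
    have hmonic : (Polynomial.X ^ Fintype.card F - Polynomial.X : Polynomial F).Monic :=
      Polynomial.monic_X_pow_sub (by simpa using Fintype.one_lt_card)
    rw [← Polynomial.prod_multiset_X_sub_C_of_monic_of_roots_card_eq hmonic (by
      rw [FiniteField.roots_X_pow_card_sub_X,
        FiniteField.X_pow_card_sub_X_natDegree_eq F Fintype.one_lt_card]
      rfl), FiniteField.roots_X_pow_card_sub_X]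
    refine IsCoprime.prod_right fun t _ => ?_
    refine ((Polynomial.irreducible_X_sub_C t).coprime_iff_not_dvd.2 ?_).symm
    rw [Polynomial.dvd_iff_isRoot, Polynomial.IsRoot, hu, eval_lineRestriction]
    exact hx t
  have hcoeff : u.coeff (d + 1) ≠ 0 := by rwa [hu, coeff_top_lineRestriction hf]
  have hlt : (Polynomial.derivative u).natDegree < u.natDegree :=
    Polynomial.natDegree_derivative_lt
      (d.succ_pos.trans_le (Polynomial.le_natDegree_of_ne_zero hcoeff)).ne'
  have hder : Polynomial.derivative u = 0 :=
    Polynomial.eq_zero_of_dvd_of_natDegree_lt (hcop.dvd_of_dvd_mul_left hdvd) hlt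
  have := Polynomial.coeff_derivative u d
  rw [hder, hd, zero_add, mul_one, Polynomial.coeff_zero] at this
  exact hcoeff this.symm

end FrobeniusTangent

section PlaneCurve

variable {F : Type*} [Field F] {f g : MvPolynomial (Fin 3) F} {d e n : ℕ}

lemma finrank_homogeneousSubmodule_fin_three (n : ℕ) :
    finrank F (homogeneousSubmodule (Fin 3) F n) = (n + 2).choose 2 := by
  have hsupp : {a : Fin 3 →₀ ℕ | a.degree = n} =
      ((Finset.univ : Finset (Fin 3)).finsuppAntidiag n : Set (Fin 3 →₀ ℕ)) := by
    ext a
    simp [Finset.mem_finsuppAntidiag, Finsupp.degree_eq_sum]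
  rw [homogeneousSubmodule_eq_finsupp_supported, hsupp]
  refine (finrank_eq_nat_card_basis (basisRestrictSupport F _)).trans ?_
  rw [Nat.card_eq_card_toFinset, Finset.toFinset_coe, Finset.card_finsuppAntidiag_nat_eq_choose,
    Finset.card_univ, Fintype.card_fin, show 3 + n - 1 = n + 2 by omega]
  exact Nat.choose_symm_of_eq_add (by omega)

instance finite_homogeneousSubmodule {σ : Type*} [Finite σ] (n : ℕ) :
    Module.Finite F (homogeneousSubmodule σ F n) :=
  Module.Finite.iff_fg.2 (homogeneousSubmodule_fg σ F n)

lemma exists_isHomogeneous_eq_mul {σ : Type*} {f g : MvPolynomial σ F} (hf : f.IsHomogeneous d)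
    (hg : g.IsHomogeneous (d + n)) (h : f ∣ g) : ∃ c, c.IsHomogeneous n ∧ g = f * c := by
  obtain ⟨c, rfl⟩ := h
  refine ⟨homogeneousComponent n c, homogeneousComponent_isHomogeneous _ _, ?_⟩
  let _ := MvPolynomial.gradedAlgebra (σ := σ) (R := F)
  have hcomp : homogeneousComponent (d + n) (f * c) = f * homogeneousComponent n c := by
    simp only [← decomposition.decompose'_apply]
    exact DirectSum.coe_decompose_mul_add_of_left_mem (homogeneousSubmodule σ F) (a := f) (b := c)
      (i := d) (j := n) hf
  rw [← hcomp, homogeneousComponent_of_mem hg, if_pos rfl]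

lemma finrank_map_mulLeft_homogeneousSubmodule (hf : f ≠ 0) (n : ℕ) :
    finrank F ((homogeneousSubmodule (Fin 3) F n).map (LinearMap.mulLeft F f)) =
      (n + 2).choose 2 := by
  rw [← finrank_homogeneousSubmodule_fin_three (F := F) n]
  exact (Submodule.equivMapOfInjective _ (mul_right_injective₀ hf) _).finrank_eq.symm

lemma inf_map_mulLeft_homogeneousSubmodule_le {σ : Type*} {f g : MvPolynomial σ F}
    (hf : f.IsHomogeneous d) (hprime : Prime f) (hfg : ¬ f ∣ g) (n : ℕ) :
    LinearMap.range (LinearMap.mulLeft F f) ⊓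
        (homogeneousSubmodule σ F (d + n)).map (LinearMap.mulLeft F g) ≤
      (homogeneousSubmodule σ F n).map (LinearMap.mulLeft F (f * g)) := by
  rintro _ ⟨⟨a, rfl⟩, b, hb, hab⟩
  have hfb : f ∣ b := (hprime.dvd_or_dvd ⟨a, hab⟩).resolve_left hfg
  obtain ⟨c, hc, rfl⟩ := exists_isHomogeneous_eq_mul hf hb hfb
  refine ⟨c, hc, ?_⟩
  rw [← hab]
  simp only [LinearMap.mulLeft_apply]
  ring

lemma choose_two_add_choose_two (d e n : ℕ) :
    (d + e + n + 2).choose 2 + (n + 2).choose 2 =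
      (e + n + 2).choose 2 + (d + n + 2).choose 2 + d * e := by
  have : ((((d + e + n + 2).choose 2 + (n + 2).choose 2 : ℕ)) : ℚ) =
      ((e + n + 2).choose 2 + (d + n + 2).choose 2 + d * e : ℕ) := by
    push_cast [Nat.cast_choose_two]
    ring
  exact_mod_cast this

/- Bézout's theorem as a dimension count: a linear map that kills the multiples of `f` and of `g`
factors in degree `d + e + n` through a component of `F[X₀, X₁, X₂] / (f, g)`. -/
lemma finrank_map_homogeneousSubmodule_le_mul (hf : f.IsHomogeneous d) (hg : g.IsHomogeneous e)
    (hprime : Prime f) (hfg : ¬ f ∣ g) {V : Type*} [AddCommGroup V] [Module F V]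
    {J : MvPolynomial (Fin 3) F →ₗ[F] V} (hJf : ∀ a, J (f * a) = 0) (hJg : ∀ a, J (g * a) = 0)
    (n : ℕ) : finrank F ((homogeneousSubmodule (Fin 3) F (d + e + n)).map J) ≤ d * e := by
  have hg0 : g ≠ 0 := fun h => hfg (h ▸ dvd_zero f)
  let P := homogeneousSubmodule (Fin 3) F
  let A := (P (e + n)).map (LinearMap.mulLeft F f)
  let B := (P (d + n)).map (LinearMap.mulLeft F g)
  let K := LinearMap.ker (J.domRestrict (P (d + e + n)))
  have hle : A ⊔ B ≤ K.map (P (d + e + n)).subtype := by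
    refine sup_le ?_ ?_
    · rintro _ ⟨a, ha, rfl⟩
      exact ⟨⟨f * a, add_assoc d e n ▸ hf.mul ha⟩, hJf a, rfl⟩
    · rintro _ ⟨a, ha, rfl⟩
      exact ⟨⟨g * a, (by omega : e + (d + n) = d + e + n) ▸ hg.mul ha⟩, hJg a, rfl⟩
  have hsup : finrank F (A ⊔ B : Submodule F _) ≤ finrank F K :=
    (Submodule.finrank_mono hle).trans (Submodule.finrank_map_le _ _)
  have hinf : finrank F (A ⊓ B : Submodule F _) ≤ (n + 2).choose 2 := by
    rw [← finrank_map_mulLeft_homogeneousSubmodule (mul_ne_zero hprime.ne_zero hg0) n]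
    exact Submodule.finrank_mono ((inf_le_inf_right _ LinearMap.map_le_range).trans
      (inf_map_mulLeft_homogeneousSubmodule_le hf hprime hfg n))
  have hA : finrank F A = (e + n + 2).choose 2 :=
    finrank_map_mulLeft_homogeneousSubmodule hprime.ne_zero _
  have hB : finrank F B = (d + n + 2).choose 2 := finrank_map_mulLeft_homogeneousSubmodule hg0 _
  have hmodular := Submodule.finrank_sup_add_finrank_inf_eq A B
  have hrank := LinearMap.finrank_range_add_finrank_ker (J.domRestrict (P (d + e + n)))
  rw [LinearMap.range_domRestrict, finrank_homogeneousSubmodule_fin_three] at hrank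
  have := choose_two_add_choose_two d e n
  change finrank F ((P (d + e + n)).map J) + finrank F K = _ at hrank
  change finrank F ((P (d + e + n)).map J) ≤ d * e
  omega

end PlaneCurve

section Star

variable {F V : Type*} [Field F] [AddCommGroup V] [Module F V] [Finite V]

/- Scaling a nonzero vector sweeps out the punctured lines through the point `p`. -/
lemma card_pred_mul_ncard_pred_le [Finite F] {s : Set V} {p : V} (hp : p ∈ s) {k : ℕ}
    (hk : ∀ v ≠ 0, {t : F | p + t • v ∈ s}.ncard ≤ k + 1) :
    (Nat.card F - 1) * (s.ncard - 1) ≤ (Nat.card V - 1) * k := by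
  let s' : Set V := {v | v ≠ 0 ∧ p + v ∈ s}
  have hpre : s' = (p + ·) ⁻¹' (s \ {p}) := by
    ext v
    simp [s', and_comm]
  have hs' : s'.ncard = s.ncard - 1 := by
    rw [hpre, Set.ncard_preimage_of_injective_subset_range (add_right_injective p) fun x _ =>
      ⟨x - p, add_sub_cancel p x⟩, Set.ncard_sdiff_singleton_of_mem hp]
  have hstar := card_mul_ncard_le (B := Fˣ) (e := fun t => MulAction.toPerm t) (s := s')
    (T := {0}ᶜ) (k := k) (fun v t hv h => hv.1 (by rw [h, MulAction.toPerm_apply, smul_zero]))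
    fun v hv0 => by
      have hpunctured : ((↑) : Fˣ → F) '' {t | t • v ∈ s'} = {t : F | p + t • v ∈ s} \ {0} := by
        ext t
        constructor
        · rintro ⟨t, ht, rfl⟩
          exact ⟨ht.2, t.ne_zero⟩
        · rintro ⟨ht, ht0⟩
          exact ⟨Units.mk0 t ht0, ⟨smul_ne_zero ht0 hv0, ht⟩, rfl⟩
      have hzero : (0 : F) ∈ {t : F | p + t • v ∈ s} := by simpa using hp
      calc {t : Fˣ | t • v ∈ s'}.ncard
          = ({t : F | p + t • v ∈ s} \ {0}).ncard := by
            rw [← hpunctured, Set.ncard_image_of_injective _ Units.val_injective]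
        _ ≤ k := by
            rw [Set.ncard_sdiff_singleton_of_mem hzero]
            exact Nat.sub_le_of_le_add (hk v hv0)
  rwa [hs', Nat.card_units, Set.ncard_compl, Set.ncard_singleton] at hstar

end Star

section AffineZeros

variable {F : Type*} [Field F] {f g : MvPolynomial (Fin 3) F} {d : ℕ}

/-- The point of the affine plane `X₂ ≠ 0` of `PG(2, F)` with given affine coordinates. -/
def affinePoint (p : F × F) : Fin 3 → F := ![p.1, p.2, 1]

/-- The point of the line `X₂ = 0` of `PG(2, F)` in a given direction of the affine plane. -/
def pointAtInfinity (w : F × F) : Fin 3 → F := ![w.1, w.2, 0]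

/-- The zeros of `f` in the affine plane `X₂ ≠ 0`. -/
def affineZeros (f : MvPolynomial (Fin 3) F) : Set (F × F) := {p | eval (affinePoint p) f = 0}

lemma affinePoint_add_smul (p w : F × F) (t : F) :
    affinePoint (p + t • w) = affinePoint p + t • pointAtInfinity w := by
  ext i
  fin_cases i <;> simp [affinePoint, pointAtInfinity]

lemma affineZeros_mul (f g : MvPolynomial (Fin 3) F) :
    affineZeros (f * g) = affineZeros f ∪ affineZeros g := by
  ext p
  simp [affineZeros]

lemma ncard_affineZeros_le [Finite F]
    (hf : ∀ p, ∀ w ≠ 0, lineRestriction f (affinePoint p) (pointAtInfinity w) ≠ 0) :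
    (affineZeros f).ncard ≤ 1 + (Nat.card F + 1) * (f.totalDegree - 1) := by
  rcases (affineZeros f).eq_empty_or_nonempty with h | ⟨p, hp⟩
  · simp [h]
  have hstar := card_pred_mul_ncard_pred_le (F := F) hp (k := f.totalDegree - 1) fun w hw => by
    have hroots := ncard_setOf_eval_eq_zero_le (hf p w hw)
    simp only [eval_lineRestriction, ← affinePoint_add_smul] at hroots
    exact (hroots.trans (natDegree_lineRestriction_le le_rfl _ _)).trans (by omega)
  have hcard : Nat.card (F × F) - 1 = (Nat.card F - 1) * (Nat.card F + 1) := by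
    simpa [sq, mul_comm] using Nat.sq_sub_sq (Nat.card F) 1
  rw [hcard, mul_assoc] at hstar
  have := Nat.le_of_mul_le_mul_left hstar (Nat.sub_pos_of_lt Finite.one_lt_card)
  omega

lemma irreducible_of_lt_ncard_affineZeros [Finite F] (hf : f.IsHomogeneous d)
    (hinfinity : ∀ w ≠ 0, eval (pointAtInfinity w) f ≠ 0)
    (hlt : 2 + (Nat.card F + 1) * (d - 2) < (affineZeros f).ncard) : Irreducible f := by
  have hf0 : f ≠ 0 := by
    rintro rfl
    exact hinfinity (1, 0) (by simp) (map_zero _)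
  refine ⟨fun hunit => ?_, fun g h hgh => ?_⟩
  · have hempty : affineZeros f = ∅ := Set.eq_empty_of_forall_notMem fun p hp =>
      (hunit.map (eval (affinePoint p))).ne_zero hp
    simp [hempty] at hlt
  have hg0 : g ≠ 0 := left_ne_zero_of_mul (hgh ▸ hf0)
  have hh0 : h ≠ 0 := right_ne_zero_of_mul (hgh ▸ hf0)
  have hdeg : g.totalDegree + h.totalDegree = d := by
    rw [← totalDegree_mul_of_isDomain hg0 hh0, ← hgh, hf.totalDegree hf0]
  have hline : ∀ p, ∀ w ≠ 0, lineRestriction g (affinePoint p) (pointAtInfinity w) *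
      lineRestriction h (affinePoint p) (pointAtInfinity w) ≠ 0 := fun p w hw => by
    rw [← lineRestriction_mul, ← hgh]
    exact lineRestriction_ne_zero hf _ (hinfinity w hw)
  have hg := ncard_affineZeros_le fun p w hw => left_ne_zero_of_mul (hline p w hw)
  have hh := ncard_affineZeros_le fun p w hw => right_ne_zero_of_mul (hline p w hw)
  have hunion : (affineZeros f).ncard ≤ (affineZeros g).ncard + (affineZeros h).ncard := by
    rw [hgh, affineZeros_mul]
    exact Set.ncard_union_le _ _
  have isUnit_of_totalDegree : ∀ c : MvPolynomial (Fin 3) F, c ≠ 0 → c.totalDegree = 0 → IsUnit c :=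
    fun c hc hc0 => by
      rw [totalDegree_eq_zero_iff_eq_C] at hc0
      rw [hc0] at hc ⊢
      exact (isUnit_iff_ne_zero.2 fun h => hc (by rw [h, C_0])).map C
  by_contra! hcon
  have hg1 := Nat.pos_of_ne_zero fun hdeg0 => hcon.1 (isUnit_of_totalDegree g hg0 hdeg0)
  have hh1 := Nat.pos_of_ne_zero fun hdeg0 => hcon.2 (isUnit_of_totalDegree h hh0 hdeg0)
  have : d - 2 = (g.totalDegree - 1) + (h.totalDegree - 1) := by omega
  rw [this, mul_add] at hlt
  omega

lemma exists_isHomogeneous_eval_eq_ite [Fintype F] [DecidableEq F] (p : F × F) :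
    ∃ I : MvPolynomial (Fin 3) F, I.IsHomogeneous (2 * (Fintype.card F - 1)) ∧
      ∀ p', eval (affinePoint p') I = if p' = p then 1 else 0 := by
  have hlinear : ∀ i : Fin 3, ∀ c : F,
      (X 2 ^ (Fintype.card F - 1) - (X i - C c * X 2) ^ (Fintype.card F - 1) :
        MvPolynomial (Fin 3) F).IsHomogeneous (Fintype.card F - 1) := fun i c =>
    (isHomogeneous_X_pow _ _).sub (by
      simpa using ((isHomogeneous_X F i).sub (isHomogeneous_C_mul_X c 2)).pow (Fintype.card F - 1))
  refine ⟨_, two_mul (Fintype.card F - 1) ▸ (hlinear 0 p.1).mul (hlinear 1 p.2), fun p' => ?_⟩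
  have hpow : ∀ c : F, 1 - c ^ (Fintype.card F - 1) = if c = 0 then 1 else 0 := fun c => by
    split_ifs with h
    · rw [h, zero_pow (Nat.sub_ne_zero_of_lt Fintype.one_lt_card), sub_zero]
    · rw [FiniteField.pow_card_sub_one_eq_one c h, sub_self]
  simp [affinePoint, hpow, sub_eq_zero, Prod.ext_iff, ← ite_and, and_comm]

lemma exists_isHomogeneous_one_eval_differential (p : F × F) {w : F × F} (hw : w ≠ 0) (α β : F) :
    ∃ l : MvPolynomial (Fin 3) F, l.IsHomogeneous 1 ∧ eval (affinePoint p) l = α ∧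
      differential l (affinePoint p) (pointAtInfinity w) = β := by
  obtain ⟨c₀, c₁, hc⟩ : ∃ c₀ c₁, c₀ * w.1 + c₁ * w.2 = β := by
    by_cases h : w.1 = 0
    · have : w.2 ≠ 0 := fun h' => hw (Prod.ext h h')
      exact ⟨0, β / w.2, by field_simp; ring⟩
    · exact ⟨β / w.1, 0, by field_simp; ring⟩
  refine ⟨C c₀ * X 0 + C c₁ * X 1 + C (α - c₀ * p.1 - c₁ * p.2) * X 2,
    ((isHomogeneous_C_mul_X _ _).add (isHomogeneous_C_mul_X _ _)).add (isHomogeneous_C_mul_X _ _),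
    ?_, ?_⟩
  · simp only [affinePoint, map_add, map_mul, eval_C, eval_X, Matrix.cons_val]
    ring
  · simpa only [differential_add, differential_mul, differential_C, differential_X,
      pointAtInfinity, eval_C, smul_zero, add_zero, LinearMap.add_apply, LinearMap.smul_apply,
      LinearMap.proj_apply, Matrix.cons_val, smul_eq_mul, mul_zero] using hc

/- If `I` is the indicator of `p`, then the square of `I` vanishes to second order at all other
points. -/
lemma exists_isHomogeneous_eval_differential [Fintype F] (p : F × F) {w : F × F} (hw : w ≠ 0)
    (α β : F) :
    ∃ a : MvPolynomial (Fin 3) F, a.IsHomogeneous (4 * (Fintype.card F - 1) + 1) ∧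
      eval (affinePoint p) a = α ∧
      differential a (affinePoint p) (pointAtInfinity w) = β ∧
      ∀ p' ≠ p, eval (affinePoint p') a = 0 ∧ differential a (affinePoint p') = 0 := by
  classical
  obtain ⟨I, hI, hIeval⟩ := exists_isHomogeneous_eval_eq_ite p
  obtain ⟨l, hl, hlp, hlw⟩ := exists_isHomogeneous_one_eval_differential p hw α
    (β - α * differential (I * I) (affinePoint p) (pointAtInfinity w))
  refine ⟨I * I * l, ?_, ?_, ?_, fun p' hp' => ?_⟩
  · convert (hI.mul hI).mul hl using 1
    ring
  · simp [hIeval, hlp]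
  · rw [differential_mul (I * I)]
    simp [hIeval, hlp, hlw]
  · simp [differential_mul, hIeval, hp']

lemma exists_ne_zero_differential_pointAtInfinity_eq_zero (f : MvPolynomial (Fin 3) F)
    (x : Fin 3 → F) : ∃ w ≠ 0, differential f x (pointAtInfinity w) = 0 := by
  by_cases h : eval x (pderiv 0 f) = 0
  · exact ⟨(1, 0), by simp, by simp [differential_apply, Fin.sum_univ_three, pointAtInfinity, h]⟩
  · refine ⟨(-eval x (pderiv 1 f), eval x (pderiv 0 f)), by simp [h], ?_⟩
    simp [differential_apply, Fin.sum_univ_three, pointAtInfinity, mul_comm]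

/- The Stöhr–Voloch argument: the curve and its `frobeniusTangent` meet at each rational point of
the curve with multiplicity at least two, so Bézout's theorem counts each point twice. -/
lemma two_mul_ncard_affineZeros_le [Fintype F] (hf : f.IsHomogeneous (d + 1)) (hd : (d : F) = 0)
    (hirr : Irreducible f) (hndvd : ¬ f ∣ frobeniusTangent f)
    (hle : d + 1 + (Fintype.card F + d) ≤ 4 * (Fintype.card F - 1) + 1) :
    2 * (affineZeros f).ncard ≤ (d + 1) * (Fintype.card F + d) := by
  classical
  choose w hw hfw using fun p =>
    exists_ne_zero_differential_pointAtInfinity_eq_zero f (affinePoint p)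
  let J : MvPolynomial (Fin 3) F →ₗ[F] (affineZeros f → F × F) :=
    { toFun := fun a p =>
        (eval (affinePoint p) a, differential a (affinePoint p) (pointAtInfinity (w p)))
      map_add' := fun a b => by ext p <;> simp [differential_add]
      map_smul' := fun c a => by ext p <;> simp [differential_smul, smul_eval] }
  have hJf : ∀ a, J (f * a) = 0 := fun a => by
    ext p
    · simp [J, show eval _ f = 0 from p.2]
    · simp [J, differential_mul, show eval _ f = 0 from p.2, hfw]
  have hJg : ∀ a, J (frobeniusTangent f * a) = 0 := fun a => by
    ext p <;> simp [J, differential_mul, eval_frobeniusTangent hf, differential_frobeniusTangent hf,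
      show eval _ f = 0 from p.2, hd]
  obtain ⟨n, hn⟩ := Nat.exists_eq_add_of_le hle
  have hsurj : (homogeneousSubmodule (Fin 3) F (d + 1 + (Fintype.card F + d) + n)).map J = ⊤ := by
    refine Submodule.eq_top_iff'.2 fun v => ?_
    choose a ha hav haw hne using fun p : affineZeros f =>
      exists_isHomogeneous_eval_differential p.1 (hw p.1) (v p).1 (v p).2
    refine ⟨∑ p, a p, IsHomogeneous.sum _ _ _ fun p _ => hn ▸ ha p, ?_⟩
    rw [map_sum]
    ext1 p
    rw [Finset.sum_apply, Finset.sum_eq_single p _ fun h => absurd (Finset.mem_univ p) h]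
    · exact Prod.ext (hav p) (haw p)
    · intro p' _ hp'
      obtain ⟨heval, hdiff⟩ := hne p' p fun h => hp' (Subtype.ext h.symm)
      simp [J, heval, hdiff]
  have hbezout := finrank_map_homogeneousSubmodule_le_mul hf (isHomogeneous_frobeniusTangent hf)
    hirr.prime hndvd hJf hJg n
  rw [hsurj, finrank_top, Module.finrank_pi_fintype] at hbezout
  simpa [mul_comm, ← Nat.card_coe_set_eq] using hbezout

theorem ncard_affineZeros_lt [Fintype F] {q : ℕ} (hq : 2 < q) (hqF : (q : F) = 0)
    (hF : Fintype.card F = q ^ 2) (hf : f.IsHomogeneous (q + 1))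
    (hinfinity : ∀ w ≠ 0, eval (pointAtInfinity w) f ≠ 0) : (affineZeros f).ncard < q ^ 3 := by
  by_contra! hle
  have hirr : Irreducible f := by
    refine irreducible_of_lt_ncard_affineZeros hf hinfinity (lt_of_lt_of_le ?_ hle)
    obtain ⟨k, rfl⟩ := Nat.exists_eq_add_of_lt hq
    rw [Nat.card_eq_fintype_card, hF, show 2 + k + 1 + 1 - 2 = k + 2 by omega]
    nlinarith
  have hndvd : ¬ f ∣ frobeniusTangent f :=
    not_dvd_frobeniusTangent hf hqF (x := pointAtInfinity (0, 1)) (y := pointAtInfinity (1, 0))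
      (hinfinity _ (by simp)) fun t => by
        have : pointAtInfinity (0, 1) + t • pointAtInfinity (1, 0) = pointAtInfinity (t, 1) := by
          ext i
          fin_cases i <;> simp [pointAtInfinity]
        rw [this]
        exact hinfinity _ (by simp)
  have hsq : 3 * q ≤ q ^ 2 := by nlinarith
  have htwo := two_mul_ncard_affineZeros_le hf hqF hirr hndvd (by omega)
  rw [hF] at htwo
  nlinarith

end AffineZeros

section Coset

variable {F σ : Type*} [Field F] [Fintype F] {f : MvPolynomial σ F} {q : ℕ}

lemma ncard_coset_zeros_lt (hq : 2 < q) (hqF : (q : F) = 0) (hF : Fintype.card F = q ^ 2)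
    (hf : f.IsHomogeneous (q + 1)) {L : Submodule F (σ → F)} (hL : finrank F L = 2)
    (hzero : ∀ v ∈ L, v ≠ 0 → eval v f ≠ 0) (x : σ → F) :
    {v : L | eval (x + (v : σ → F)) f = 0}.ncard < q ^ 3 := by
  have : Module.Finite F L := Module.finite_of_finrank_eq_succ hL
  let b := Module.finBasisOfFinrankEq F L hL
  let e : (F × F) ≃ₗ[F] L := (LinearEquiv.finTwoArrow F F).symm.trans b.equivFun.symm
  have he : ∀ p, (e p : σ → F) = p.1 • (b 0 : σ → F) + p.2 • (b 1 : σ → F) := fun p => by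
    simp [e, Basis.equivFun_symm_apply, Fin.sum_univ_two]
  let g : MvPolynomial (Fin 3) F :=
    aeval (fun i => C ((b 0 : σ → F) i) * X 0 + C ((b 1 : σ → F) i) * X 1 + C (x i) * X 2) f
  have hg : g.IsHomogeneous (q + 1) := one_mul (q + 1) ▸ hf.aeval _ fun i =>
    ((isHomogeneous_C_mul_X _ _).add (isHomogeneous_C_mul_X _ _)).add (isHomogeneous_C_mul_X _ _)
  have heval : ∀ y, eval y g = eval ((e (y 0, y 1) : σ → F) + y 2 • x) f := fun y => by
    rw [he, ← aeval_eq_eval, ← aeval_eq_eval, comp_aeval_apply]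
    congr 2
    ext i
    simp [mul_comm]
  have hpre : affineZeros g = e ⁻¹' {v : L | eval (x + (v : σ → F)) f = 0} := by
    ext p
    simp [affineZeros, affinePoint, heval, add_comm]
  rw [← Set.ncard_preimage_of_injective_subset_range e.injective (by simp), ← hpre]
  refine ncard_affineZeros_lt hq hqF hF hg fun w hw => ?_
  simpa [heval, pointAtInfinity] using hzero (e w) (e w).2 (by simpa using hw)

end Coset

section Conjugation

variable {F : Type*} [Field F] [Fintype F] {q : ℕ}

lemma exists_expChar_pow_eq (hF : Fintype.card F = q ^ 2) :
    ∃ p k : ℕ, p.Prime ∧ CharP F p ∧ 0 < k ∧ q = p ^ k := by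
  obtain ⟨p, hp⟩ := CharP.exists F
  obtain ⟨n, hprime, hcard⟩ := FiniteField.card F p
  obtain ⟨k, -, rfl⟩ := (Nat.dvd_prime_pow hprime).1
    (hcard ▸ hF ▸ dvd_pow_self q two_ne_zero : q ∣ p ^ (n : ℕ))
  refine ⟨p, k, hprime, hp, Nat.pos_of_ne_zero ?_, rfl⟩
  rintro rfl
  exact Fintype.one_lt_card.ne' (by simpa using hF)

lemma natCast_eq_zero_of_card (hF : Fintype.card F = q ^ 2) : (q : F) = 0 := by
  obtain ⟨p, k, -, _, hk, rfl⟩ := exists_expChar_pow_eq hF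
  simp [hk.ne']

lemma add_pow_of_card (hF : Fintype.card F = q ^ 2) (x y : F) :
    (x + y) ^ q = x ^ q + y ^ q := by
  obtain ⟨p, k, hp, _, -, rfl⟩ := exists_expChar_pow_eq hF
  have := Fact.mk hp
  exact add_pow_char_pow x y p k

/-- The involution `x ↦ x ^ q` of the field with `q ^ 2` elements. -/
def conj (hF : Fintype.card F = q ^ 2) : F →+* F where
  toFun x := x ^ q
  map_one' := one_pow q
  map_mul' x y := mul_pow x y q
  map_zero' := zero_pow fun hq => Fintype.card_ne_zero (by rw [hF, hq, sq, zero_mul])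
  map_add' := add_pow_of_card hF

lemma conj_apply (hF : Fintype.card F = q ^ 2) (x : F) : conj hF x = x ^ q := rfl

lemma conj_conj (hF : Fintype.card F = q ^ 2) (x : F) : conj hF (conj hF x) = x := by
  rw [conj_apply, conj_apply, ← pow_mul, ← sq, ← hF, FiniteField.pow_card]

end Conjugation

section BoseBurton

variable {F V : Type*} [Field F] [AddCommGroup V] [Module F V]

lemma exists_mem_mkQ_eq {Z : Set V} (hsmul : ∀ c : F, ∀ z ∈ Z, c • z ∈ Z) (hzero : 0 ∈ Z)
    (hmeet : ∀ L : Submodule F V, finrank F L = 2 → ∃ v ∈ L, v ≠ 0 ∧ v ∈ Z) {p : V} (hp : p ∉ Z)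
    (w : V) : ∃ z ∈ Z, (Submodule.span F {p}).mkQ z = (Submodule.span F {p}).mkQ w := by
  by_cases hw : LinearIndependent F ![w, p]
  · obtain ⟨v, hvL, hv0, hvZ⟩ := hmeet (Submodule.span F (Set.range ![w, p]))
      (finrank_span_eq_card hw)
    obtain ⟨a, b, rfl⟩ : ∃ a b : F, a • w + b • p = v := by
      rwa [Matrix.range_cons_cons_empty, Submodule.mem_span_pair] at hvL
    have ha : a ≠ 0 := by
      rintro rfl
      have hb : b ≠ 0 := by
        rintro rfl
        simp at hv0
      exact hp (by simpa [hb] using hsmul b⁻¹ _ hvZ)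
    refine ⟨_, hsmul a⁻¹ _ hvZ, (Submodule.Quotient.eq _).2 ?_⟩
    rw [smul_add, inv_smul_smul₀ ha, add_sub_cancel_left, smul_smul]
    exact Submodule.smul_mem _ _ (Submodule.mem_span_singleton_self _)
  · obtain ⟨a, rfl⟩ : ∃ a : F, a • p = w := by
      rw [LinearIndependent.pair_symm_iff,
        LinearIndependent.pair_iff' (ne_of_mem_of_not_mem hzero hp).symm] at hw
      push Not at hw
      exact hw
    exact ⟨0, hzero, (Submodule.Quotient.eq _).2 <| by
      simpa using Submodule.smul_mem _ a (Submodule.mem_span_singleton_self p)⟩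

/- Projecting from a point off `Z` maps `Z` onto the quotient, hence, by counting, bijectively. So
no two points of `Z` differ by a vector off `Z`. -/
theorem exists_submodule_coe_eq [Finite F] [Finite V] {Z : Set V}
    (hsmul : ∀ c : F, ∀ z ∈ Z, c • z ∈ Z)
    (hmeet : ∀ L : Submodule F V, finrank F L = 2 → ∃ v ∈ L, v ≠ 0 ∧ v ∈ Z)
    (hcard : Nat.card F * Z.ncard = Nat.card V) : ∃ E : Submodule F V, (E : Set V) = Z := by
  have hZ : 0 < Z.ncard := Nat.pos_of_mul_pos_left (hcard ▸ Nat.card_pos)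
  have hzero : (0 : V) ∈ Z := by
    obtain ⟨z, hz⟩ := (Set.ncard_pos).1 hZ
    simpa using hsmul 0 z hz
  have hsub : ∀ x ∈ Z, ∀ y ∈ Z, x - y ∈ Z := by
    intro x hx y hy
    by_contra hxy
    have hne : x - y ≠ 0 := fun h => hxy (h ▸ hzero)
    let π := (Submodule.span F {x - y}).mkQ
    have himage : π '' Z = Set.univ := Set.eq_univ_of_forall fun w => by
      obtain ⟨w, rfl⟩ := Submodule.mkQ_surjective _ w
      exact exists_mem_mkQ_eq hsmul hzero hmeet hxy w
    have hinj : Set.InjOn π Z := by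
      rw [← Set.ncard_image_iff, himage, Set.ncard_univ]
      refine Nat.eq_of_mul_eq_mul_left (Nat.card_pos (α := F)) ?_
      rw [hcard, Submodule.card_eq_card_quotient_mul_card (Submodule.span F {x - y}),
        ← Nat.card_congr (LinearEquiv.toSpanNonzeroSingleton F V (x - y) hne).toEquiv]
    have hπ : π x = π y :=
      (Submodule.Quotient.eq _).2 (Submodule.mem_span_singleton_self (x - y))
    exact hne (sub_eq_zero.2 (hinj hx hy hπ))
  refine ⟨⟨⟨⟨Z, fun hx hy => ?_⟩, hzero⟩, fun c _ hx => hsmul c _ hx⟩, rfl⟩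
  simpa using hsub _ hx _ (hsmul (-1) _ hy)

end BoseBurton

section ZerosOnSubspace

variable {F σ : Type*} [Field F] [Finite σ] {f : MvPolynomial σ F}
  {W : Submodule F (σ → F)}

lemma exists_mem_ne_zero_eval_eq_zero [Fintype F] {q : ℕ} (hq : 2 < q)
    (hF : Fintype.card F = q ^ 2) (hf : f.IsHomogeneous (q + 1)) (hW : W ≠ ⊤)
    (hcount : q * {v | v ∉ W ∧ eval v f = 0}.ncard = {v | v ∉ W}.ncard)
    {L : Submodule F (σ → F)} (hLW : L ≤ W) (hL : finrank F L = 2) :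
    ∃ v ∈ L, v ≠ 0 ∧ eval v f = 0 := by
  by_contra! hzero
  have hcoset := card_mul_ncard_le (B := L) (e := fun v => Equiv.addRight (v : σ → F))
    (s := {v | v ∉ W ∧ eval v f = 0}) (T := {v | v ∉ W}) (k := q ^ 3 - 1)
    (fun x v h hx => h.1 (W.add_mem hx (hLW v.2))) fun x _ => by
      refine Nat.le_sub_one_of_lt (lt_of_le_of_lt (Set.ncard_le_ncard fun v hv => ?_)
        (ncard_coset_zeros_lt hq (natCast_eq_zero_of_card hF) hF hf hL hzero x))
      exact hv.2
  rw [Module.natCard_eq_pow_finrank (K := F), Nat.card_eq_fintype_card, hF, hL, ← hcount] at hcoset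
  have hpos : 0 < {v | v ∉ W ∧ eval v f = 0}.ncard := by
    obtain ⟨u, hu⟩ : ∃ u, u ∉ W := by
      simpa [Submodule.eq_top_iff'] using hW
    have : 0 < {v | v ∉ W}.ncard := (Set.ncard_pos).2 ⟨u, hu⟩
    exact Nat.pos_of_mul_pos_left (hcount ▸ this)
  have hlt : q * (q ^ 3 - 1) < (q ^ 2) ^ 2 := by
    rw [show (q ^ 2) ^ 2 = q * q ^ 3 by ring]
    exact Nat.mul_lt_mul_of_pos_left (Nat.sub_lt (by positivity) one_pos) (by omega)
  nlinarith

lemma exists_submodule_eval_eq_zero_iff [Finite F] {d : ℕ} (hf : f.IsHomogeneous d)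
    (hmeet : ∀ L ≤ W, finrank F L = 2 → ∃ v ∈ L, v ≠ 0 ∧ eval v f = 0)
    (hcount : Nat.card F * {v | v ∈ W ∧ eval v f = 0}.ncard = Nat.card W) :
    ∃ E ≤ W, finrank F E + 1 = finrank F W ∧ ∀ v ∈ W, eval v f = 0 ↔ v ∈ E := by
  let Z : Set W := {v | eval (v : σ → F) f = 0}
  have himage : (↑) '' Z = {v | v ∈ W ∧ eval v f = 0} := by
    ext v
    simp [Z, and_comm]
  have hZ : Z.ncard = {v | v ∈ W ∧ eval v f = 0}.ncard := by
    rw [← himage, Set.ncard_image_of_injective _ Subtype.val_injective]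
  obtain ⟨E, hE⟩ : ∃ E : Submodule F W, (E : Set W) = Z := by
    refine exists_submodule_coe_eq (fun c v hv => ?_) (fun L hL => ?_) (by rw [hZ, hcount])
    · have hv : eval (v : σ → F) f = 0 := hv
      simp [Z, eval_smul_of_isHomogeneous hf, hv]
    · obtain ⟨_, ⟨v, hvL, rfl⟩, hv0, hfv⟩ := hmeet (L.map W.subtype) (Submodule.map_subtype_le W L)
        (by rw [← hL, Submodule.finrank_map_subtype_eq])
      exact ⟨v, hvL, by simpa using hv0, hfv⟩
  refine ⟨E.map W.subtype, Submodule.map_subtype_le W E, ?_, fun v hv => ?_⟩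
  · refine Nat.pow_right_injective (Finite.one_lt_card (α := F)) ?_
    simp only [pow_succ', Submodule.finrank_map_subtype_eq]
    rw [← Module.natCard_eq_pow_finrank (V := E), ← Module.natCard_eq_pow_finrank (V := W),
      ← hcount, ← hZ, ← hE]
    rfl
  · have : (⟨v, hv⟩ : W) ∈ E ↔ eval v f = 0 := by
      rw [← SetLike.mem_coe, hE]
      rfl
    simp [← this, hv]

end ZerosOnSubspace

section GeneratorFlag

variable {F σ : Type*} [Field F] [Fintype F] [Fintype σ] {q : ℕ} {f : MvPolynomial σ F}
  {W : Submodule F (σ → F)}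

/-- The configuration cut out on the hypersurface `f = 0` of degree `q + 1` by a projective
subspace `W` meeting it in few points, in a vector space of dimension `finrank E + finrank W`: the
zeros of `f` on `W` form the hyperplane `E` of `W`, a proportion `1 / q` of the vectors off `W` are
zeros, and no coset of `E` off `W` consists of zeros. For a Hermitian variety, `E` is a generator
and `W` is its perpendicular. -/
structure IsGeneratorFlag (q : ℕ) (f : MvPolynomial σ F) (E W : Submodule F (σ → F)) : Prop where
  two_lt : 2 < q
  card_field : Fintype.card F = q ^ 2
  isHomogeneous : f.IsHomogeneous (q + 1)
  le : E ≤ W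
  eval_eq_zero_iff : ∀ v ∈ W, eval v f = 0 ↔ v ∈ E
  finrank_add_finrank : finrank F E + finrank F W = Fintype.card σ
  two_le_finrank : 2 ≤ finrank F E
  mul_ncard_zeros : q * {v | v ∉ W ∧ eval v f = 0}.ncard = {v | v ∉ W}.ncard
  exists_eval_ne_zero : ∀ u ∉ W, ∃ a ∈ E, eval (u + a) f ≠ 0

theorem exists_isGeneratorFlag (hq : 2 < q) (hF : Fintype.card F = q ^ 2)
    (hf : f.IsHomogeneous (q + 1)) (hW : 2 * finrank F W = Fintype.card σ + 1)
    (hthree : 3 ≤ finrank F W)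
    (hcountW : q ^ 2 * {v | v ∈ W ∧ eval v f = 0}.ncard = Nat.card W)
    (hcount : q * {v | v ∉ W ∧ eval v f = 0}.ncard = {v | v ∉ W}.ncard)
    (hnot : ∀ W' : Submodule F (σ → F), finrank F W' = finrank F W → ∃ v ∈ W', eval v f ≠ 0) :
    ∃ E, IsGeneratorFlag q f E W := by
  have hne : W ≠ ⊤ := by
    rintro rfl
    rw [finrank_top, Module.finrank_pi] at hW hthree
    omega
  obtain ⟨E, hEW, hE, hzeros⟩ := exists_submodule_eval_eq_zero_iff hf
    (fun _ => exists_mem_ne_zero_eval_eq_zero hq hF hf hne hcount)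
    (by rw [Nat.card_eq_fintype_card, hF, hcountW])
  refine ⟨E, hq, hF, hf, hEW, hzeros, by omega, by omega, hcount, fun u hu => ?_⟩
  have huE : u ∉ E := fun h => hu (hEW h)
  obtain ⟨v, hv, hfv⟩ := hnot (E ⊔ Submodule.span F {u}) (by
    rw [Submodule.finrank_sup_span_singleton huE, hE])
  obtain ⟨a, ha, w, hw, rfl⟩ := Submodule.mem_sup.1 hv
  obtain ⟨c, rfl⟩ := Submodule.mem_span_singleton.1 hw
  have hc : c ≠ 0 := by
    rintro rfl
    exact hfv (by simpa using (hzeros a (hEW ha)).2 ha)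
  refine ⟨c⁻¹ • a, E.smul_mem _ ha, fun h => hfv ?_⟩
  rw [show a + c • u = c • (u + c⁻¹ • a) by rw [smul_add, smul_inv_smul₀ hc, add_comm],
    eval_smul_of_isHomogeneous hf, h, mul_zero]

end GeneratorFlag

/-- The zeros of `f` on the coset `u + E`, as a set of elements of `E`. -/
def cosetZeros {F σ : Type*} [Field F] (f : MvPolynomial σ F) (E : Submodule F (σ → F))
    (u : σ → F) : Set E :=
  {a | eval (u + (a : σ → F)) f = 0}

namespace IsGeneratorFlag

variable {F σ : Type*} [Field F] [Fintype F] [Fintype σ] {q : ℕ} {f : MvPolynomial σ F}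
  {E W : Submodule F (σ → F)} (hG : IsGeneratorFlag q f E W)
include hG

lemma natCard_field : Nat.card F = q ^ 2 := by
  rw [Nat.card_eq_fintype_card, hG.card_field]

lemma succ_lt_card_field : q + 1 < Fintype.card F := by
  have := hG.two_lt
  rw [hG.card_field]
  nlinarith

lemma eval_eq_zero {a : σ → F} (ha : a ∈ E) : eval a f = 0 :=
  (hG.eval_eq_zero_iff a (hG.le ha)).2 ha

lemma add_notMem {u a : σ → F} (hu : u ∉ W) (ha : a ∈ E) : u + a ∉ W :=
  fun h => hu ((W.add_mem_iff_left (hG.le ha)).1 h)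

lemma natDegree_lineRestriction_le {v : σ → F} (hv : v ∈ E) (x : σ → F) :
    (lineRestriction f x v).natDegree ≤ q := by
  refine Polynomial.natDegree_le_iff_coeff_eq_zero.2 fun k hk => ?_
  have htotal := hG.isHomogeneous.totalDegree_le
  obtain rfl | hk : k = q + 1 ∨ q + 1 < k := by omega
  · rw [coeff_top_lineRestriction hG.isHomogeneous, hG.eval_eq_zero hv]
  · exact Polynomial.coeff_eq_zero_of_natDegree_lt
      ((HermitianVariety.natDegree_lineRestriction_le htotal x v).trans_lt hk)

lemma natDegree_lineRestriction_lt {v x : σ → F} (hv : v ∈ E) (hdf : differential f v x = 0) :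
    (lineRestriction f x v).natDegree < q := by
  refine (hG.natDegree_lineRestriction_le hv x).lt_of_ne fun h => ?_
  have hq := hG.two_lt
  refine (Polynomial.leadingCoeff_ne_zero.2 ?_ : (lineRestriction f x v).leadingCoeff ≠ 0) ?_
  · rintro h0
    simp [h0] at h
    omega
  · rw [Polynomial.leadingCoeff, h, coeff_lineRestriction_eq_differential hG.isHomogeneous, hdf]

lemma differential_eq_zero {a v : σ → F} (ha : a ∈ E) (hv : v ∈ E) : differential f v a = 0 := by
  have hzero : lineRestriction f a v = 0 :=
    Polynomial.eq_zero_of_natDegree_lt_card_of_eval_eq_zero _ Function.injective_id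
      (fun t => (eval_lineRestriction f a v t).trans
        (hG.eval_eq_zero (E.add_mem ha (E.smul_mem t hv))))
      ((hG.natDegree_lineRestriction_le hv a).trans_lt (by have := hG.succ_lt_card_field; omega))
  rw [← coeff_lineRestriction_eq_differential hG.isHomogeneous, hzero, Polynomial.coeff_zero]

lemma differential_add_right {a v : σ → F} (ha : a ∈ E) (hv : v ∈ E) (u : σ → F) :
    differential f v (u + a) = differential f v u := by
  rw [map_add, hG.differential_eq_zero ha hv, add_zero]

lemma ncard_setOf_eval_line_le {v u : σ → F} (hv : v ∈ E) (hdf : differential f v u ≠ 0) :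
    {t : F | eval (u + t • v) f = 0}.ncard ≤ q := by
  have hne : lineRestriction f u v ≠ 0 := fun h => hdf <| by
    rw [← coeff_lineRestriction_eq_differential hG.isHomogeneous, h, Polynomial.coeff_zero]
  simp only [← eval_lineRestriction]
  exact (ncard_setOf_eval_eq_zero_le hne).trans (hG.natDegree_lineRestriction_le hv u)

/- If all differentials vanish at `u`, then `f` has degree less than `q` on every line of the coset,
and these lines are counted through a point where `f` does not vanish. -/
lemma mul_ncard_cosetZeros_lt {u : σ → F} (hu : u ∉ W) (hdf : ∀ v ∈ E, differential f v u = 0) :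
    q * (cosetZeros f E u).ncard < Nat.card E := by
  obtain ⟨a₀, ha₀, hne⟩ := hG.exists_eval_ne_zero u hu
  let s : Set E := {a | eval (u + a₀ + (a : σ → F)) f = 0}
  have hs : s.ncard = (cosetZeros f E u).ncard := by
    rw [← Set.ncard_preimage_of_injective_subset_range (s := cosetZeros f E u)
      (add_right_injective (⟨a₀, ha₀⟩ : E)) fun x _ => ⟨x - ⟨a₀, ha₀⟩, add_sub_cancel _ x⟩]
    simp [s, cosetZeros, add_assoc]
  have h0 : 0 ∉ s := by simpa [s] using hne
  have hline : ∀ v : E, v ≠ 0 → {t : F | 0 + t • v ∈ insert 0 s}.ncard ≤ q - 1 + 1 := by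
    intro v hv
    have hP : lineRestriction f (u + a₀) v ≠ 0 := fun h => hne <| by
      simpa [h] using (eval_lineRestriction f (u + a₀) v 0).symm
    have hsub : {t : F | 0 + t • v ∈ insert 0 s} ⊆
        insert 0 {t | (lineRestriction f (u + a₀) v).eval t = 0} := by
      intro t ht
      simpa [s, hv, eval_lineRestriction] using ht
    refine (Set.ncard_le_ncard hsub).trans ((Set.ncard_insert_le _ _).trans ?_)
    have hdeg := hG.natDegree_lineRestriction_lt v.2
      ((hG.differential_add_right ha₀ v.2 u).trans (hdf v v.2))
    have := ncard_setOf_eval_eq_zero_le hP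
    omega
  have hstar := card_pred_mul_ncard_pred_le (Set.mem_insert 0 s) hline
  rw [Set.ncard_insert_of_notMem h0, hs, hG.natCard_field, Nat.add_sub_cancel,
    show q ^ 2 - 1 = (q - 1) * (q + 1) by rw [mul_comm, ← Nat.sq_sub_sq, one_pow], mul_assoc,
    mul_comm (Nat.card E - 1)] at hstar
  have hq := hG.two_lt
  have hcard : 0 < Nat.card E := Nat.card_pos
  have := Nat.le_of_mul_le_mul_left hstar (by omega)
  rw [add_mul] at this
  omega

lemma mul_ncard_cosetZeros_le {u : σ → F} (hu : u ∉ W) :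
    q * (cosetZeros f E u).ncard ≤ Nat.card E := by
  by_cases! hdf : ∀ v ∈ E, differential f v u = 0
  · exact (hG.mul_ncard_cosetZeros_lt hu hdf).le
  obtain ⟨v, hv, hne⟩ := hdf
  have hlines := card_mul_ncard_le (B := F) (e := fun t => Equiv.addRight (t • (⟨v, hv⟩ : E)))
    (s := cosetZeros f E u) (T := Set.univ) (k := q) (fun _ _ _ => trivial) fun a _ => by
      simpa [cosetZeros, add_assoc] using hG.ncard_setOf_eval_line_le (u := u + a) hv
        (by rwa [hG.differential_add_right a.2 hv])
  rw [hG.natCard_field, Set.ncard_univ, sq, mul_assoc, mul_comm _ q] at hlines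
  exact Nat.le_of_mul_le_mul_left hlines (by have := hG.two_lt; omega)

lemma mul_ncard_cosetZeros_eq {u : σ → F} (hu : u ∉ W) :
    q * (cosetZeros f E u).ncard = Nat.card E := by
  have hq := hG.two_lt
  obtain ⟨k, hk⟩ : q ∣ Nat.card E := by
    rw [Module.natCard_eq_pow_finrank (K := F), hG.natCard_field, ← pow_mul]
    have := hG.two_le_finrank
    exact dvd_pow_self q (by omega)
  have hcoset := ncard_setOf_perm_mem_eq (B := E) (e := fun a => Equiv.addRight (a : σ → F))
    (s := {v | v ∉ W ∧ eval v f = 0}) (T := {v | v ∉ W}) (k := k)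
    (fun x a h hx => h.1 (W.add_mem hx (hG.le a.2))) (fun x hx => ?_)
    (by rw [hk, ← hG.mul_ncard_zeros]; ring) hu
  · rw [hk, ← hcoset]
    congr 2
    ext a
    simp [cosetZeros, hG.add_notMem hu a.2]
  · refine Nat.le_of_mul_le_mul_left (c := q) ?_ (by omega)
    rw [← hk]
    refine le_trans (Nat.mul_le_mul_left q (Set.ncard_le_ncard ?_)) (hG.mul_ncard_cosetZeros_le hx)
    exact fun a ha => ha.2

lemma exists_differential_ne_zero {u : σ → F} (hu : u ∉ W) : ∃ v ∈ E, differential f v u ≠ 0 := by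
  by_contra! hdf
  exact (hG.mul_ncard_cosetZeros_lt hu hdf).ne (hG.mul_ncard_cosetZeros_eq hu)

lemma ncard_setOf_eval_line_eq {v u : σ → F} (hu : u ∉ W) (hv : v ∈ E)
    (hdf : differential f v u ≠ 0) : {t : F | eval (u + t • v) f = 0}.ncard = q := by
  have hline := ncard_setOf_perm_mem_eq (B := F) (e := fun t => Equiv.addRight (t • (⟨v, hv⟩ : E)))
    (s := cosetZeros f E u) (T := Set.univ) (k := q) (fun _ _ _ => trivial) (fun a _ => by
      simpa [cosetZeros, add_assoc] using hG.ncard_setOf_eval_line_le (u := u + a) hv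
        (by rwa [hG.differential_add_right a.2 hv]))
    (by rw [hG.natCard_field, Set.ncard_univ, ← hG.mul_ncard_cosetZeros_eq hu]; ring)
    (Set.mem_univ 0)
  simpa [cosetZeros] using hline

end IsGeneratorFlag

section FullLines

lemma ncard_eq_card_mul_of_ncard_fiber_eq {A B : Type*} [Fintype A] [Finite B] {Z : Set (A × B)}
    {k : ℕ} (hfiber : ∀ a, {b | (a, b) ∈ Z}.ncard = k) : Z.ncard = Fintype.card A * k := by
  have hfiber : ∀ a, Nat.card {b // (a, b) ∈ Z} = k := hfiber
  rw [← Nat.card_coe_set_eq, Nat.card_congr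
    (Equiv.subtypeProdEquivSigmaSubtype fun a b => (a, b) ∈ Z), Nat.card_sigma,
    Finset.sum_eq_card_nsmul fun a _ => hfiber a, Finset.card_univ, smul_eq_mul]

variable {F : Type*} [Field F]

/-- The pairs `(m, c)` such that the set `Z` of points of the affine plane contains the whole line
`t ↦ (t, c + m * t)`. -/
def fullLines (Z : Set (F × F)) : Set (F × F) :=
  {ℓ | ∀ t, (t, ℓ.2 + ℓ.1 * t) ∈ Z}

lemma eq_of_affine_eq {ℓ ℓ' : F × F} {t t' : F} (ht : t ≠ t')
    (h : ℓ.2 + ℓ.1 * t = ℓ'.2 + ℓ'.1 * t) (h' : ℓ.2 + ℓ.1 * t' = ℓ'.2 + ℓ'.1 * t') : ℓ = ℓ' := by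
  have hslope : ℓ.1 = ℓ'.1 := by
    have : (ℓ.1 - ℓ'.1) * (t - t') = 0 := by linear_combination h - h'
    simpa [sub_eq_zero, ht] using this
  refine Prod.ext hslope ?_
  rw [hslope] at h
  exact add_right_cancel h

variable [Fintype F]

/- Among `n + 1` lines two meet in each column, and a pair meets in at most one column. -/
lemma card_le_of_ncard_image_affine_le {L : Finset (F × F)} {n : ℕ}
    (hn : (n + 1).choose 2 < Fintype.card F)
    (hL : ∀ t : F, ((fun ℓ : F × F => ℓ.2 + ℓ.1 * t) '' L).ncard ≤ n) : L.card ≤ n := by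
  classical
  by_contra! hlt
  obtain ⟨L', hL'L, hL'⟩ := Finset.exists_subset_card_eq (Nat.succ_le_of_lt hlt)
  have hmeet : ∀ t : F, ∃ x ∈ L', ∃ y ∈ L', x ≠ y ∧ x.2 + x.1 * t = y.2 + y.1 * t := fun t => by
    refine Finset.exists_ne_map_eq_of_card_lt_of_maps_to
      (t := L'.image fun ℓ => ℓ.2 + ℓ.1 * t) ?_ fun x hx => by
        exact Finset.mem_image_of_mem _ hx
    rw [← Set.ncard_coe_finset (L'.image _), Finset.coe_image, hL']
    exact Nat.lt_succ_of_le ((Set.ncard_le_ncard (Set.image_mono hL'L)).trans (hL t))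
  choose x hx y hy hxy hxyt using hmeet
  obtain ⟨t, -, t', -, ht, hpair⟩ := Finset.exists_ne_map_eq_of_card_lt_of_maps_to
    (s := Finset.univ) (t := L'.powersetCard 2) (f := fun t => {x t, y t})
    (by rwa [Finset.card_powersetCard, hL', Finset.card_univ]) fun t _ => by
      rw [Finset.mem_coe, Finset.mem_powersetCard]
      exact ⟨by simp [Finset.insert_subset_iff, hx, hy], Finset.card_pair (hxy t)⟩
  have hcoe : ({x t, y t} : Set (F × F)) = {x t', y t'} := by
    simpa using congrArg ((↑) : Finset (F × F) → Set (F × F)) hpair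
  rcases Set.pair_eq_pair_iff.1 hcoe with ⟨h₁, h₂⟩ | ⟨h₁, h₂⟩
  · exact hxy t (eq_of_affine_eq ht (hxyt t) (by rw [h₁, h₂, hxyt t']))
  · exact hxy t (eq_of_affine_eq ht (hxyt t) (by rw [h₁, h₂, hxyt t']))

variable {q : ℕ} {Z : Set (F × F)}

/- Otherwise every line through the point meets `Z` in at most `q` points, so that `Z` has at most
`1 + (q ^ 2 + 1) * (q - 1)` points. -/
lemma exists_mem_fullLines (hq : 2 < q) (hF : Fintype.card F = q ^ 2)
    (hcolumn : ∀ t, {s | (t, s) ∈ Z}.ncard = q)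
    (hline : ∀ m c, (m, c) ∉ fullLines Z → {t | (t, c + m * t) ∈ Z}.ncard ≤ q) {t₀ s₀ : F}
    (h₀ : (t₀, s₀) ∈ Z) : ∃ ℓ ∈ fullLines Z, ℓ.2 + ℓ.1 * t₀ = s₀ := by
  by_contra! hnot
  have hthrough : ∀ v : F × F, v ≠ 0 → {t : F | (t₀, s₀) + t • v ∈ Z}.ncard ≤ q - 1 + 1 := by
    rintro ⟨a, b⟩ hv
    rw [Nat.sub_add_cancel (by omega)]
    obtain rfl | ha := eq_or_ne a 0
    · have hb : b ≠ 0 := by simpa using hv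
      refine (hcolumn t₀).symm ▸ Set.ncard_le_ncard_of_injOn (fun t => s₀ + t * b) ?_ ?_
      · intro t ht
        simpa using ht
      · exact fun t _ t' _ h => mul_right_cancel₀ hb (add_left_cancel h)
    · refine le_trans ?_ (hline (b / a) (s₀ - b / a * t₀) fun h => hnot _ h (by ring))
      refine Set.ncard_le_ncard_of_injOn (fun t => t₀ + t * a) ?_ ?_
      · intro t ht
        have : s₀ - b / a * t₀ + b / a * (t₀ + t * a) = s₀ + t * b := by
          field_simp
          ring
        simpa [this] using ht
      · exact fun t _ t' _ h => mul_right_cancel₀ ha (add_left_cancel h)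
  have hstar := card_pred_mul_ncard_pred_le h₀ hthrough
  rw [ncard_eq_card_mul_of_ncard_fiber_eq hcolumn, Nat.card_prod, Nat.card_eq_fintype_card, hF]
    at hstar
  have hpos : 0 < q ^ 2 - 1 := Nat.sub_pos_of_lt (by nlinarith)
  have hfactor : q ^ 2 * q ^ 2 - 1 = (q ^ 2 - 1) * (q ^ 2 + 1) := by
    rw [mul_comm (q ^ 2 - 1), ← sq]
    exact Nat.sq_sub_sq (q ^ 2) 1
  rw [hfactor, mul_assoc] at hstar
  have hle := Nat.le_of_mul_le_mul_left hstar hpos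
  obtain ⟨k, rfl⟩ := Nat.exists_eq_add_of_lt hq
  rw [Nat.sub_le_iff_le_add, Nat.add_sub_cancel] at hle
  nlinarith

/- There are at most `q` full lines, and they cover the `q` points of each column: hence no two of
them meet. -/
theorem exists_forall_mem_iff (hq : 2 < q) (hF : Fintype.card F = q ^ 2)
    (hcolumn : ∀ t, {s | (t, s) ∈ Z}.ncard = q)
    (hline : ∀ m c, (m, c) ∉ fullLines Z → {t | (t, c + m * t) ∈ Z}.ncard ≤ q) :
    ∃ m : F, ∀ t s, (t, s) ∈ Z ↔ (0, s - m * t) ∈ Z := by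
  classical
  have himage : ∀ t : F, (fun ℓ : F × F => ℓ.2 + ℓ.1 * t) '' fullLines Z = {s | (t, s) ∈ Z} :=
    fun t => Set.Subset.antisymm (Set.image_subset_iff.2 fun ℓ hℓ => hℓ t)
      fun s hs => exists_mem_fullLines hq hF hcolumn hline hs
  have hcard : (fullLines Z).ncard ≤ q := by
    rw [Set.ncard_eq_toFinset_card']
    refine card_le_of_ncard_image_affine_le ?_ fun t => ?_
    · rw [hF, Nat.choose_two_right, Nat.div_lt_iff_lt_mul two_pos, Nat.add_sub_cancel]
      nlinarith
    · rw [Set.coe_toFinset, himage, hcolumn]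
  have hinj : ∀ t : F, Set.InjOn (fun ℓ : F × F => ℓ.2 + ℓ.1 * t) (fullLines Z) := fun t => by
    rw [← Set.ncard_image_iff]
    exact (Set.ncard_image_le).antisymm (by rwa [himage, hcolumn])
  have hparallel : ∀ ℓ ∈ fullLines Z, ∀ ℓ' ∈ fullLines Z, ℓ.1 = ℓ'.1 := by
    intro ℓ hℓ ℓ' hℓ'
    by_contra hne
    have hsub : ℓ.1 - ℓ'.1 ≠ 0 := sub_ne_zero.2 hne
    refine hne (congrArg Prod.fst (hinj ((ℓ'.2 - ℓ.2) / (ℓ.1 - ℓ'.1)) hℓ hℓ' ?_))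
    field_simp
    ring
  obtain ⟨ℓ₀, hℓ₀⟩ : (fullLines Z).Nonempty := by
    have : {s | ((0 : F), s) ∈ Z}.Nonempty := (Set.ncard_pos).1 (by rw [hcolumn]; omega)
    exact Set.image_nonempty.1 (himage 0 ▸ this)
  refine ⟨ℓ₀.1, fun t s => ⟨fun h => ?_, fun h => ?_⟩⟩
  · obtain ⟨ℓ, hℓ, rfl⟩ := exists_mem_fullLines hq hF hcolumn hline h
    simpa [hparallel ℓ hℓ ℓ₀ hℓ₀] using hℓ 0
  · obtain ⟨ℓ, hℓ, hs⟩ := exists_mem_fullLines hq hF hcolumn hline h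
    have : ℓ.2 + ℓ.1 * t = s := by
      rw [hparallel ℓ hℓ ℓ₀ hℓ₀]
      linear_combination hs
    exact this ▸ hℓ t

end FullLines

section SplitPolynomials

open Polynomial in
lemma eq_of_coeff_eq_of_ncard_roots_eq {F : Type*} [Field F] [Finite F] {P Q : F[X]} {n : ℕ}
    (hP : P.natDegree ≤ n) (hQ : Q.natDegree ≤ n) (hcoeff : P.coeff n = Q.coeff n)
    (hroots : ∀ t, P.eval t = 0 ↔ Q.eval t = 0) (hcard : {t | P.eval t = 0}.ncard = n) :
    P = Q := by
  have hdeg : (P - Q).degree < n := by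
    rw [degree_lt_iff_coeff_zero]
    intro k hk
    rw [Polynomial.coeff_sub]
    obtain rfl | hk := hk.eq_or_lt
    · rw [hcoeff, sub_self]
    · rw [coeff_eq_zero_of_natDegree_lt (hP.trans_lt hk),
        coeff_eq_zero_of_natDegree_lt (hQ.trans_lt hk), sub_zero]
  have hfin := Set.toFinite {t | P.eval t = 0}
  refine eq_of_degree_sub_lt_of_eval_finset_eq hfin.toFinset ?_ fun t ht => ?_
  · rwa [← Set.ncard_eq_toFinset_card _ hfin, hcard]
  · have hPt : P.eval t = 0 := hfin.mem_toFinset.1 ht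
    rw [hPt, (hroots t).1 hPt]

end SplitPolynomials

namespace IsGeneratorFlag

variable {F σ : Type*} [Field F] [Fintype F] [Fintype σ] {q : ℕ} {f : MvPolynomial σ F}
  {E W : Submodule F (σ → F)} (hG : IsGeneratorFlag q f E W)
include hG

lemma pow_pow (x : F) : (x ^ q) ^ q = x := conj_conj hG.card_field x

lemma exists_differential_eq_one {u : σ → F} (hu : u ∉ W) : ∃ v ∈ E, differential f v u = 1 := by
  obtain ⟨v, hv, hne⟩ := hG.exists_differential_ne_zero hu
  refine ⟨(differential f v u)⁻¹ ^ q • v, E.smul_mem _ hv, ?_⟩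
  rw [differential_smul_point hG.isHomogeneous, hG.pow_pow, LinearMap.smul_apply, smul_eq_mul,
    inv_mul_cancel₀ hne]

lemma ncard_setOf_eval_affine_le {u v y : σ → F} (hv : v ∈ E) (hy : y ∈ E) {m c : F}
    (hne : ¬ ∀ t : F, eval (u + t • y + (c + m * t) • v) f = 0) :
    {t : F | eval (u + t • y + (c + m * t) • v) f = 0}.ncard ≤ q := by
  have heval : ∀ t : F, eval (u + t • y + (c + m * t) • v) f =
      (lineRestriction f (u + c • v) (y + m • v)).eval t := fun t => by
    rw [eval_lineRestriction, add_smul, smul_add, smul_smul, mul_comm m]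
    congr 2
    abel
  simp only [heval] at hne ⊢
  have hrestr : lineRestriction f (u + c • v) (y + m • v) ≠ 0 := fun h => by simp [h] at hne
  exact (ncard_setOf_eval_eq_zero_le hrestr).trans
    (hG.natDegree_lineRestriction_le (E.add_mem hy (E.smul_mem m hv)) _)

lemma exists_slope {u v y : σ → F} (hu : u ∉ W) (hv : v ∈ E) (hdf : differential f v u ≠ 0)
    (hy : y ∈ E) :
    ∃ m : F, ∀ t s : F, eval (u + t • y + s • v) f = 0 ↔ eval (u + (s - m * t) • v) f = 0 := by
  have hcolumn : ∀ t : F, {s : F | eval (u + t • y + s • v) f = 0}.ncard = q := fun t => by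
    have hty := E.smul_mem t hy
    exact hG.ncard_setOf_eval_line_eq (hG.add_notMem hu hty) hv
      (by rwa [hG.differential_add_right hty hv])
  obtain ⟨m, hm⟩ := exists_forall_mem_iff (Z := {p : F × F | eval (u + p.1 • y + p.2 • v) f = 0})
    hG.two_lt hG.card_field hcolumn fun m c hne => hG.ncard_setOf_eval_affine_le hv hy hne
  refine ⟨m, fun t s => (hm t s).trans ?_⟩
  rw [Set.mem_ofPred_eq, zero_smul, add_zero]

lemma exists_eval_add_smul_add_smul {u v y : σ → F} (hu : u ∉ W) (hv : v ∈ E)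
    (hdf : differential f v u ≠ 0) (hy : y ∈ E) :
    ∃ m : F, ∀ t s : F, eval (u + t • y + s • v) f = eval (u + (s - m * t) • v) f := by
  obtain ⟨m, hm⟩ := hG.exists_slope hu hv hdf hy
  refine ⟨m, fun t s => ?_⟩
  have hshift : ∀ s, u + (s - m * t) • v = u + (-(m * t)) • v + s • v := fun s => by module
  have hcoeff : ∀ a ∈ E, (lineRestriction f (u + a) v).coeff q = differential f v u :=
    fun a ha => by
      rw [coeff_lineRestriction_eq_differential hG.isHomogeneous, hG.differential_add_right ha hv]
  have hty := E.smul_mem t hy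
  have heq : lineRestriction f (u + t • y) v = lineRestriction f (u + (-(m * t)) • v) v := by
    refine eq_of_coeff_eq_of_ncard_roots_eq (hG.natDegree_lineRestriction_le hv _)
      (hG.natDegree_lineRestriction_le hv _) ?_ (fun s => ?_) ?_
    · rw [hcoeff _ hty, hcoeff _ (E.smul_mem _ hv)]
    · rw [eval_lineRestriction, eval_lineRestriction, hm, hshift]
    · simp only [eval_lineRestriction]
      exact hG.ncard_setOf_eval_line_eq (hG.add_notMem hu hty) hv
        (by rwa [hG.differential_add_right hty hv])
  rw [hshift, ← eval_lineRestriction, heq, eval_lineRestriction]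

lemma lineRestriction_eq_of_forall_eval_eq {a b x y : σ → F} (ha : a ∈ E) (hb : b ∈ E)
    (h : ∀ t : F, eval (x + t • a) f = eval (y + t • b) f) :
    lineRestriction f x a = lineRestriction f y b := by
  have hq := hG.succ_lt_card_field
  refine Polynomial.eq_of_natDegree_lt_card_of_eval_eq _ _ Function.injective_id (fun t => ?_)
    (max_lt ?_ ?_)
  · simp only [id_eq, eval_lineRestriction, h]
  · exact (hG.natDegree_lineRestriction_le ha x).trans_lt (by omega)
  · exact (hG.natDegree_lineRestriction_le hb y).trans_lt (by omega)

lemma differential_eq_of_forall_eval_eq {a b x y : σ → F} (ha : a ∈ E) (hb : b ∈ E)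
    (h : ∀ t : F, eval (x + t • a) f = eval (y + t • b) f) :
    differential f a x = differential f b y := by
  rw [← coeff_lineRestriction_eq_differential hG.isHomogeneous,
    ← coeff_lineRestriction_eq_differential hG.isHomogeneous,
    hG.lineRestriction_eq_of_forall_eval_eq ha hb h]

theorem eval_add_smul_add_smul {u v y : σ → F} (hu : u ∉ W) (hv : v ∈ E)
    (hdf : differential f v u = 1) (hy : y ∈ E) (t s : F) :
    eval (u + t • y + s • v) f = eval (u + (s + t * differential f y u ^ q) • v) f := by
  obtain ⟨m, hm⟩ := hG.exists_eval_add_smul_add_smul hu hv (hdf ▸ one_ne_zero) hy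
  have hslope : differential f y u = (-m) ^ q := by
    have htranslate : ∀ t : F, eval (u + t • y) f = eval (u + t • (-m) • v) f := fun t => by
      simpa [smul_smul, mul_comm] using hm t 0
    rw [hG.differential_eq_of_forall_eval_eq hy (E.smul_mem _ hv) htranslate,
      differential_smul_point hG.isHomogeneous, LinearMap.smul_apply, hdf, smul_eq_mul, mul_one]
  rw [hm, hslope, hG.pow_pow, mul_neg, ← sub_eq_add_neg, mul_comm]

lemma lineRestriction_eq {u v y : σ → F} (hu : u ∉ W) (hv : v ∈ E)
    (hdf : differential f v u = 1) (hy : y ∈ E) :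
    lineRestriction f u y = lineRestriction f u (differential f y u ^ q • v) :=
  hG.lineRestriction_eq_of_forall_eval_eq hy (E.smul_mem _ hv) fun t => by
    simpa [smul_smul] using hG.eval_add_smul_add_smul hu hv hdf hy t 0

lemma differential_add_point_of_notMem {u a a' : σ → F} (hu : u ∉ W) (ha : a ∈ E) (ha' : a' ∈ E) :
    differential f (a + a') u = differential f a u + differential f a' u := by
  obtain ⟨v, hv, hdf⟩ := hG.exists_differential_eq_one hu
  have htranslate : ∀ t : F, eval (u + t • (a + a')) f =
      eval (u + t • (differential f a u + differential f a' u) ^ q • v) f := fun t => by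
    have hta' := E.smul_mem t ha'
    have h := hG.eval_add_smul_add_smul (hG.add_notMem hu hta') hv
      (by rw [hG.differential_add_right hta' hv, hdf]) ha t 0
    rw [hG.differential_add_right hta' ha, hG.eval_add_smul_add_smul hu hv hdf ha'] at h
    rw [smul_add, add_comm (t • a), ← add_assoc, ← add_zero (u + _ + _), ← zero_smul F v, h,
      add_pow_of_card hG.card_field, smul_smul, mul_add, zero_add]
  rw [hG.differential_eq_of_forall_eval_eq (E.add_mem ha ha') (E.smul_mem _ hv) htranslate,
    differential_smul_point hG.isHomogeneous, hG.pow_pow, LinearMap.smul_apply, hdf, smul_eq_mul,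
    mul_one]

end IsGeneratorFlag

section ProperSubspace

variable {K V : Type*} [Field K] [AddCommGroup V] [Module K V] {W : Submodule K V}

lemma eq_of_forall_notMem_eq (hW : W ≠ ⊤) {φ ψ : Dual K V} (h : ∀ u ∉ W, φ u = ψ u) : φ = ψ := by
  ext u
  by_cases hu : u ∈ W
  · obtain ⟨d, hd⟩ := SetLike.exists_not_mem_of_ne_top W hW rfl
    have hud : φ (u + d) = ψ (u + d) := h _ fun h => hd ((W.add_mem_iff_right hu).1 h)
    rw [map_add, map_add, h d hd] at hud
    exact add_right_cancel hud
  · exact h u hu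

lemma notMem_sup_span_singleton_comm {u d : V} (hu : u ∉ W) (hd : d ∉ W ⊔ K ∙ u) :
    u ∉ W ⊔ K ∙ d := by
  rw [sup_comm, ← W.span_eq, ← Submodule.span_insert] at hd ⊢
  exact fun h => hd (mem_span_insert_exchange h (by rwa [W.span_eq]))

end ProperSubspace

namespace IsGeneratorFlag

variable {F σ : Type*} [Field F] [Fintype F] [Fintype σ] {q : ℕ} {f : MvPolynomial σ F}
  {E W : Submodule F (σ → F)} (hG : IsGeneratorFlag q f E W)
include hG

lemma sup_span_singleton_ne_top (u : σ → F) : W ⊔ F ∙ u ≠ ⊤ := fun htop => by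
  have hspan : finrank F (F ∙ u) ≤ 1 := by
    simpa using finrank_span_le_card (R := F) {u}
  have hle := Submodule.finrank_add_le_finrank_add_finrank W (F ∙ u)
  rw [htop, finrank_top, Module.finrank_fintype_fun_eq_card] at hle
  have := hG.finrank_add_finrank
  have := hG.two_le_finrank
  omega

lemma ne_top : W ≠ ⊤ := by simpa using hG.sup_span_singleton_ne_top 0

lemma differential_add_point {a a' : σ → F} (ha : a ∈ E) (ha' : a' ∈ E) :
    differential f (a + a') = differential f a + differential f a' :=
  eq_of_forall_notMem_eq hG.ne_top fun _ hu => hG.differential_add_point_of_notMem hu ha ha'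

/-- The linear forms `differential f a` with `a ∈ E`. -/
def polarForms : Submodule F (Dual F (σ → F)) where
  carrier := differential f '' E
  zero_mem' := ⟨0, E.zero_mem, by
    simpa using hG.differential_add_point E.zero_mem E.zero_mem⟩
  add_mem' := by
    rintro _ _ ⟨a, ha, rfl⟩ ⟨a', ha', rfl⟩
    exact ⟨a + a', E.add_mem ha ha', hG.differential_add_point ha ha'⟩
  smul_mem' := by
    rintro t _ ⟨a, ha, rfl⟩
    exact ⟨t ^ q • a, E.smul_mem _ ha, by
      rw [differential_smul_point hG.isHomogeneous, hG.pow_pow]⟩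

lemma dualAnnihilator_le_polarForms : W.dualAnnihilator ≤ hG.polarForms := by
  rw [← Subspace.dualCoannihilator_dualAnnihilator_eq (W := hG.polarForms)]
  refine Submodule.dualAnnihilator_anti fun u hu => ?_
  by_contra huW
  obtain ⟨v, hv, hne⟩ := hG.exists_differential_ne_zero huW
  exact hne ((Submodule.mem_dualCoannihilator _).1 hu _ ⟨v, hv, rfl⟩)

theorem bijOn_differential : Set.BijOn (differential f) E W.dualAnnihilator := by
  have hfinrank : finrank F W.dualAnnihilator = finrank F E := by
    have h := Subspace.finrank_add_finrank_dualAnnihilator_eq W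
    rw [Module.finrank_fintype_fun_eq_card] at h
    have := hG.finrank_add_finrank
    omega
  have hcard : (W.dualAnnihilator : Set (Dual F (σ → F))).ncard = (E : Set (σ → F)).ncard := by
    rw [← Nat.card_coe_set_eq, ← Nat.card_coe_set_eq, SetLike.coe_sort_coe, SetLike.coe_sort_coe,
      Module.natCard_eq_pow_finrank (K := F), hfinrank, ← Module.natCard_eq_pow_finrank]
  have hle : (differential f '' E).ncard ≤ (E : Set (σ → F)).ncard := Set.ncard_image_le
  have himage : differential f '' E = W.dualAnnihilator :=
    (Set.eq_of_subset_of_ncard_le hG.dualAnnihilator_le_polarForms (hle.trans hcard.ge)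
      ((E : Set (σ → F)).toFinite.image (differential f))).symm
  have hinj : Set.InjOn (differential f) E :=
    Set.injOn_of_ncard_image_eq (by rw [himage, hcard])
  exact himage ▸ hinj.bijOn_image

lemma differential_eq_zero_of_mem {a w : σ → F} (ha : a ∈ E) (hw : w ∈ W) :
    differential f a w = 0 :=
  (Submodule.mem_dualAnnihilator _).1 (hG.bijOn_differential.mapsTo ha) w hw

lemma exists_differential_eq_one_and_eq_zero {u d : σ → F} (hu : u ∉ W ⊔ F ∙ d) :
    ∃ a ∈ E, differential f a u = 1 ∧ differential f a d = 0 := by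
  obtain ⟨φ, hφu, hφ⟩ := Submodule.exists_le_ker_of_notMem hu
  obtain ⟨hφW, hφd⟩ := sup_le_iff.1 hφ
  rw [Submodule.span_singleton_le_iff_mem, LinearMap.mem_ker] at hφd
  have hmem : (φ u)⁻¹ • φ ∈ W.dualAnnihilator :=
    Submodule.smul_mem _ _ ((Submodule.mem_dualAnnihilator _).2 fun w hw => hφW hw)
  obtain ⟨a, ha, hdf⟩ := hG.bijOn_differential.surjOn hmem
  exact ⟨a, ha, by simp [hdf, hφu], by simp [hdf, hφd]⟩

end IsGeneratorFlag

section PencilPolynomials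

variable {F : Type*} [Field F] [Fintype F] {q m : ℕ} {e e' : Polynomial F}

/- Taking `q`-th powers replaces `t ^ (q * m)` by `t ^ m`; comparing degrees then gives `q ∣ m`. -/
lemma eq_zero_of_eval_eq_mul_pow (hF : Fintype.card F = q ^ 2) (hm : 2 ≤ m) (hmq : m < q)
    (he : e.natDegree ≤ q + 1 - m) (he' : e'.natDegree ≤ q + 1 - m)
    (h : ∀ t, e'.eval t = e.eval t * t ^ (q * m)) : e = 0 := by
  by_contra hne
  have hbound : q * (q + 1 - m) + m < q ^ 2 := by
    obtain ⟨k, rfl⟩ := Nat.exists_eq_add_of_le hmq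
    obtain ⟨l, rfl⟩ := Nat.exists_eq_add_of_le hm
    rw [show 2 + l + 1 + k + 1 - (2 + l) = k + 2 by omega]
    nlinarith
  have hdeg : (e ^ q * Polynomial.X ^ m).natDegree = q * e.natDegree + m := by
    rw [Polynomial.natDegree_mul_X_pow m (pow_ne_zero q hne), Polynomial.natDegree_pow]
  have hid : e' ^ q = e ^ q * Polynomial.X ^ m := by
    refine Polynomial.eq_of_natDegree_lt_card_of_eval_eq _ _ Function.injective_id (fun t => ?_) ?_
    · have hpow : (t ^ (q * m)) ^ q = t ^ m := by
        rw [← pow_mul, show q * m * q = q ^ 2 * m by ring, ← hF, pow_mul, FiniteField.pow_card]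
      simp only [id_eq, Polynomial.eval_mul, Polynomial.eval_pow, Polynomial.eval_X, h, mul_pow,
        hpow]
    · rw [hdeg, Polynomial.natDegree_pow, hF]
      exact max_lt ((Nat.mul_le_mul_left q he').trans_lt (by omega))
        ((Nat.add_le_add_right (Nat.mul_le_mul_left q he) m).trans_lt hbound)
  have hdvd : q ∣ q * e.natDegree + m :=
    ⟨e'.natDegree, by rw [← hdeg, ← hid, Polynomial.natDegree_pow]⟩
  exact Nat.not_dvd_of_pos_of_lt (by omega) hmq ((Nat.dvd_add_right ⟨_, rfl⟩).1 hdvd)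

lemma natDegree_eq_zero_of_eval_eq_mul_pow (hq : 2 < q) (hF : Fintype.card F = q ^ 2)
    (he : e.natDegree ≤ q) (he' : e'.natDegree ≤ q)
    (h : ∀ t, e'.eval t = e.eval t * t ^ q) : e.natDegree = 0 := by
  obtain rfl | hne := eq_or_ne e 0
  · exact Polynomial.natDegree_zero
  have hdeg : (e * Polynomial.X ^ q).natDegree = e.natDegree + q :=
    Polynomial.natDegree_mul_X_pow q hne
  have hid : e' = e * Polynomial.X ^ q := by
    refine Polynomial.eq_of_natDegree_lt_card_of_eval_eq _ _ Function.injective_id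
      (fun t => by simp [h]) ?_
    rw [hdeg, hF]
    exact max_lt (by nlinarith) (by nlinarith)
  rw [← hid] at hdeg
  omega

end PencilPolynomials

namespace IsGeneratorFlag

variable {F σ : Type*} [Field F] [Fintype F] [Fintype σ] {q : ℕ} {f : MvPolynomial σ F}
  {E W : Submodule F (σ → F)} (hG : IsGeneratorFlag q f E W)
include hG

lemma coeff_lineRestriction_eq {u v y : σ → F} (hu : u ∉ W) (hv : v ∈ E)
    (hdf : differential f v u = 1) (hy : y ∈ E) (m : ℕ) :
    (lineRestriction f u y).coeff m =
      (lineRestriction f u v).coeff m * differential f y u ^ (q * m) := by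
  rw [hG.lineRestriction_eq hu hv hdf hy, lineRestriction_smul, Polynomial.comp_C_mul_X_coeff,
    pow_mul]

lemma exists_pencil_polynomials {u d : σ → F} (hu : u ∉ W ⊔ F ∙ d) (hd : d ∉ W ⊔ F ∙ u) (m : ℕ) :
    ∃ v ∈ E, (∀ t : F, differential f v (u + t • d) = 1) ∧ ∃ e e' : Polynomial F,
      e.natDegree ≤ q + 1 - m ∧ e'.natDegree ≤ q + 1 - m ∧
      (∀ t, e.eval t = (lineRestriction f (u + t • d) v).coeff m) ∧
      ∀ t, e'.eval t = e.eval t * t ^ (q * m) := by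
  obtain ⟨v, hv, hvu, hvd⟩ := hG.exists_differential_eq_one_and_eq_zero hu
  obtain ⟨v', hv', hv'd, hv'u⟩ := hG.exists_differential_eq_one_and_eq_zero hd
  have hvt : ∀ t : F, differential f v (u + t • d) = 1 := fun t => by simp [hvu, hvd]
  obtain ⟨p, hp, hpeval⟩ := exists_totalDegree_le_eval_eq_coeff_lineRestriction hG.isHomogeneous v m
  obtain ⟨p', hp', hp'eval⟩ :=
    exists_totalDegree_le_eval_eq_coeff_lineRestriction hG.isHomogeneous v' m
  refine ⟨v, hv, hvt, lineRestriction p u d, lineRestriction p' u d,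
    HermitianVariety.natDegree_lineRestriction_le hp _ _,
    HermitianVariety.natDegree_lineRestriction_le hp' _ _,
    fun t => by rw [eval_lineRestriction, hpeval], fun t => ?_⟩
  have hut : u + t • d ∉ W := fun h =>
    one_ne_zero ((hvt t).symm.trans (hG.differential_eq_zero_of_mem hv h))
  rw [eval_lineRestriction, eval_lineRestriction, hpeval, hp'eval,
    hG.coeff_lineRestriction_eq hut hv (hvt t) hv']
  simp [hv'u, hv'd]

lemma exists_notMem_sup_span_singleton (u : σ → F) : ∃ d, d ∉ W ⊔ F ∙ u :=
  SetLike.exists_not_mem_of_ne_top _ (hG.sup_span_singleton_ne_top u) rfl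

lemma coeff_lineRestriction_eq_zero {u y : σ → F} (hu : u ∉ W) (hy : y ∈ E) {m : ℕ} (hm : 2 ≤ m)
    (hmq : m < q) : (lineRestriction f u y).coeff m = 0 := by
  obtain ⟨d, hd⟩ := hG.exists_notMem_sup_span_singleton u
  obtain ⟨v, hv, hdf, e, e', he, he', heval, heval'⟩ :=
    hG.exists_pencil_polynomials (notMem_sup_span_singleton_comm hu hd) hd m
  have hv0 := heval 0
  have he0 := eq_zero_of_eval_eq_mul_pow hG.card_field hm hmq he he' heval'
  rw [he0, Polynomial.eval_zero, zero_smul, add_zero] at hv0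
  rw [hG.coeff_lineRestriction_eq hu hv (by simpa using hdf 0) hy, ← hv0, zero_mul]

lemma differential_eq_mul_pow_of_notMem_sup {u u' : σ → F} (hu : u ∉ W) (hu' : u' ∉ W ⊔ F ∙ u)
    {c : F} (hc : ∀ y ∈ E, differential f u y = c * differential f y u ^ q) :
    ∀ y ∈ E, differential f u' y = c * differential f y u' ^ q := by
  have hd : u' - u ∉ W ⊔ F ∙ u := fun h => hu' <| by
    simpa using Submodule.add_mem _ h
      (Submodule.mem_sup_right (S := W) (Submodule.mem_span_singleton_self u))
  obtain ⟨v, hv, hdf, e, e', he, he', heval, heval'⟩ :=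
    hG.exists_pencil_polynomials (notMem_sup_span_singleton_comm hu hd) hd 1
  simp only [mul_one] at heval'
  have hconst := Polynomial.eq_C_of_natDegree_eq_zero
    (natDegree_eq_zero_of_eval_eq_mul_pow hG.two_lt hG.card_field he he' heval')
  have hvu : differential f v u = 1 := by simpa using hdf 0
  have hvu' : differential f v u' = 1 := by simpa using hdf 1
  have hcoeff : differential f u' v = c := by
    have h0 := heval 0
    have h1 := heval 1
    rw [hconst, Polynomial.eval_C, coeff_one_lineRestriction] at h0 h1
    rw [zero_smul, add_zero, hc v hv, hvu, one_pow, mul_one] at h0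
    rwa [one_smul, add_sub_cancel, h0, eq_comm] at h1
  have hW' : u' ∉ W := fun h => hu' (Submodule.mem_sup_left h)
  intro y hy
  rw [← coeff_one_lineRestriction, hG.coeff_lineRestriction_eq hW' hv hvu' hy,
    coeff_one_lineRestriction, hcoeff, mul_one]

theorem exists_differential_eq_mul_pow :
    ∃ c : F, ∀ u ∉ W, ∀ y ∈ E, differential f u y = c * differential f y u ^ q := by
  obtain ⟨u₀, hu₀⟩ := SetLike.exists_not_mem_of_ne_top W hG.ne_top rfl
  obtain ⟨v, hv, hdf⟩ := hG.exists_differential_eq_one hu₀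
  have hc : ∀ y ∈ E, differential f u₀ y = differential f u₀ v * differential f y u₀ ^ q :=
    fun y hy => by
      simpa [coeff_one_lineRestriction] using hG.coeff_lineRestriction_eq hu₀ hv hdf hy 1
  refine ⟨differential f u₀ v, fun u hu => ?_⟩
  by_cases hspan : u ∈ W ⊔ F ∙ u₀
  · obtain ⟨d, hd⟩ := hG.exists_notMem_sup_span_singleton u₀
    have hle : W ⊔ F ∙ u ≤ W ⊔ F ∙ u₀ :=
      sup_le le_sup_left ((Submodule.span_singleton_le_iff_mem _ _).2 hspan)
    exact hG.differential_eq_mul_pow_of_notMem_sup (fun h => hd (Submodule.mem_sup_left h))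
      (notMem_sup_span_singleton_comm hu fun h => hd (hle h))
      (hG.differential_eq_mul_pow_of_notMem_sup hu₀ hd hc)
  · exact hG.differential_eq_mul_pow_of_notMem_sup hu₀ hspan hc

end IsGeneratorFlag

section AdditivePolynomial

variable {F : Type*} [Field F] [Fintype F] {q : ℕ}

lemma exists_pow_ne_self (hq : 2 < q) (hF : Fintype.card F = q ^ 2) : ∃ s : F, s ^ q ≠ s := by
  by_contra! h
  have hX : (Polynomial.X ^ q : Polynomial F) = Polynomial.X :=
    Polynomial.eq_of_natDegree_lt_card_of_eval_eq _ _ Function.injective_id (fun t => by simp [h])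
      (by rw [Polynomial.natDegree_X_pow, Polynomial.natDegree_X, hF, max_lt_iff]
          constructor <;> nlinarith)
  have hdeg := congrArg Polynomial.natDegree hX
  rw [Polynomial.natDegree_X_pow, Polynomial.natDegree_X] at hdeg
  omega

/- If `ρ` is a root of `c T ^ q + T`, then `c r ^ q + r = ρ (x - x ^ q)` for `x = r / ρ`; both
`x - x ^ q` and `s ^ q - s` are negated by the `q`-th power map, so their product is fixed. -/
lemma exists_mul_add_pow_eq (hq : 2 < q) (hF : Fintype.card F = q ^ 2) {c ρ : F} (hρ : ρ ≠ 0)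
    (hroot : c * ρ ^ q + ρ = 0) :
    ∃ κ : F, κ ≠ 0 ∧ ∀ r : F, (κ * (c * r ^ q + r)) ^ q = κ * (c * r ^ q + r) := by
  have hneg : ∀ x : F, (x - x ^ q) ^ q = -(x - x ^ q) := fun x => by
    rw [← conj_apply hF, ← conj_apply hF, map_sub, conj_conj, neg_sub]
  obtain ⟨s, hs⟩ := exists_pow_ne_self hq hF
  refine ⟨(s - s ^ q) / ρ, div_ne_zero (sub_ne_zero.2 hs.symm) hρ, fun r => ?_⟩
  have hsplit : (s - s ^ q) / ρ * (c * r ^ q + r) = (s - s ^ q) * (r / ρ - (r / ρ) ^ q) := by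
    have hρq : ρ ^ q ≠ 0 := pow_ne_zero q hρ
    rw [div_pow]
    field_simp
    linear_combination r ^ q * hroot
  rw [hsplit, mul_pow, hneg, hneg, neg_mul_neg]

end AdditivePolynomial

namespace IsGeneratorFlag

variable {F σ : Type*} [Field F] [Fintype F] [Fintype σ] {q : ℕ} {f : MvPolynomial σ F}
  {E W : Submodule F (σ → F)} (hG : IsGeneratorFlag q f E W)
include hG

lemma eval_add_eq_sum {u y : σ → F} (hu : u ∉ W) (hy : y ∈ E) :
    eval (u + y) f = eval u f + differential f u y + differential f y u := by
  obtain ⟨k, rfl⟩ := Nat.exists_eq_add_of_le' hG.two_lt.le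
  have hmiddle : ∀ i ∈ Finset.range k, (lineRestriction f u y).coeff (i + 1 + 1) = 0 :=
    fun i hi => hG.coeff_lineRestriction_eq_zero hu hy (by omega)
      (by have := Finset.mem_range.1 hi; omega)
  have heval := Polynomial.eval_eq_sum_range'
    (Nat.lt_succ_of_le (hG.natDegree_lineRestriction_le hy u)) 1
  simp only [one_pow, mul_one] at heval
  rw [eval_lineRestriction, one_smul, Finset.sum_range_succ, Finset.sum_range_succ',
    Finset.sum_range_succ', Finset.sum_eq_zero hmiddle,
    coeff_lineRestriction_eq_differential hG.isHomogeneous, coeff_zero_lineRestriction] at heval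
  rw [heval, zero_add, zero_add, coeff_one_lineRestriction]
  ring

lemma exists_ne_eval_eq_neg {c : F}
    (hc : ∀ u ∉ W, ∀ y ∈ E, differential f u y = c * differential f y u ^ q) {u : σ → F}
    (hu : u ∉ W) :
    ∃ r r' : F, r ≠ r' ∧ eval u f = -(c * r ^ q + r) ∧ eval u f = -(c * r' ^ q + r') := by
  obtain ⟨v, hv, hdf⟩ := hG.exists_differential_eq_one hu
  have hroot : ∀ t : F, eval (u + t • v) f = 0 → eval u f = -(c * (t ^ q) ^ q + t ^ q) :=
    fun t ht => by
      have htv : differential f (t • v) u = t ^ q := by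
        rw [differential_smul_point hG.isHomogeneous, LinearMap.smul_apply, hdf, smul_eq_mul,
          mul_one]
      rw [hG.eval_add_eq_sum hu (E.smul_mem t hv), hc u hu _ (E.smul_mem t hv), htv] at ht
      linear_combination ht
  have hone : 1 < {t : F | eval (u + t • v) f = 0}.ncard := by
    rw [hG.ncard_setOf_eval_line_eq hu hv (hdf ▸ one_ne_zero)]
    exact one_lt_two.trans hG.two_lt
  obtain ⟨t, ht, t', ht', hne⟩ := (Set.one_lt_ncard_iff_nontrivial).1 hone
  exact ⟨t ^ q, t' ^ q, fun h => hne ((conj hG.card_field).injective h), hroot t ht, hroot t' ht'⟩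

theorem exists_mul_eval_pow_eq :
    ∃ κ : F, κ ≠ 0 ∧ ∀ u ∉ W, (κ * eval u f) ^ q = κ * eval u f := by
  obtain ⟨c, hc⟩ := hG.exists_differential_eq_mul_pow
  obtain ⟨u₀, hu₀⟩ := SetLike.exists_not_mem_of_ne_top W hG.ne_top rfl
  obtain ⟨r, r', hne, hr, hr'⟩ := hG.exists_ne_eval_eq_neg hc hu₀
  have hroot : c * (r - r') ^ q + (r - r') = 0 := by
    rw [← conj_apply hG.card_field, map_sub, conj_apply, conj_apply]
    linear_combination hr - hr'
  obtain ⟨κ, hκ, hfixed⟩ :=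
    exists_mul_add_pow_eq hG.two_lt hG.card_field (sub_ne_zero.2 hne) hroot
  refine ⟨κ, hκ, fun u hu => ?_⟩
  obtain ⟨s, -, -, hs, -⟩ := hG.exists_ne_eval_eq_neg hc hu
  rw [hs, mul_neg, ← conj_apply hG.card_field, map_neg, conj_apply, hfixed]

end IsGeneratorFlag

section FixedValues

variable {F σ : Type*} [Field F] [Fintype F] {q : ℕ}

lemma sum_units_pow_mul_inv_pow [DecidableEq F] {j k : ℕ} (hj : j < Fintype.card F - 1)
    (hk : k < Fintype.card F - 1) :
    ∑ t : Fˣ, ((t ^ j * t⁻¹ ^ k : Fˣ) : F) = if j = k then -1 else 0 := by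
  have hpow : ∀ t : Fˣ, t ^ j * t⁻¹ ^ k = t ^ (j + (Fintype.card F - 1 - k)) := fun t => by
    have hinv : t⁻¹ ^ k = t ^ (Fintype.card F - 1 - k) := by
      rw [inv_pow, inv_eq_iff_mul_eq_one, ← pow_add, Nat.add_sub_of_le hk.le,
        ← Fintype.card_units, pow_card_eq_one]
    rw [hinv, pow_add]
  have hdvd : Fintype.card F - 1 ∣ j + (Fintype.card F - 1 - k) ↔ j = k := by
    refine ⟨fun ⟨c, hc⟩ => ?_, fun h => ⟨1, by omega⟩⟩
    obtain rfl : c = 1 := by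
      have hpos : 0 < c := Nat.pos_of_ne_zero (by rintro rfl; omega)
      have hlt : c < 2 := by
        by_contra! h
        have := Nat.mul_le_mul_left (Fintype.card F - 1) h
        omega
      omega
    omega
  simp only [hpow, Units.val_pow_eq_pow_val, FiniteField.sum_pow_units, hdvd]

lemma coeff_eq_neg_sum_units [DecidableEq F] {g : Polynomial F} {k : ℕ}
    (hg : g.natDegree < Fintype.card F - 1) (hk : k < Fintype.card F - 1) :
    g.coeff k = -∑ t : Fˣ, g.eval (t : F) * ((t⁻¹ : Fˣ) : F) ^ k := by
  have hsum : ∑ t : Fˣ, g.eval (t : F) * ((t⁻¹ : Fˣ) : F) ^ k =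
      ∑ j ∈ Finset.range (Fintype.card F - 1), g.coeff j * if j = k then -1 else 0 := by
    simp only [Polynomial.eval_eq_sum_range' hg, Finset.sum_mul]
    rw [Finset.sum_comm]
    refine Finset.sum_congr rfl fun j hj => ?_
    rw [← sum_units_pow_mul_inv_pow (Finset.mem_range.1 hj) hk, Finset.mul_sum]
    simp [mul_assoc]
  rw [hsum]
  simp [hk]

lemma coeff_pow_eq_coeff_mul (hF : Fintype.card F = q ^ 2) {g : Polynomial F}
    (hg : g.natDegree < Fintype.card F - 1) (hfixed : ∀ t ≠ 0, g.eval t ^ q = g.eval t) {k : ℕ}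
    (hk : k < Fintype.card F - 1) (hqk : q * k < Fintype.card F - 1) :
    g.coeff k ^ q = g.coeff (q * k) := by
  classical
  rw [coeff_eq_neg_sum_units hg hk, coeff_eq_neg_sum_units hg hqk, ← conj_apply hF, map_neg,
    map_sum]
  simp only [map_mul, map_pow, conj_apply, hfixed _ (Units.ne_zero _), ← pow_mul]

variable {f : MvPolynomial σ F} {W : Submodule F (σ → F)}

lemma natDegree_lineRestriction_lt_card_sub_one (hq : 2 < q) (hF : Fintype.card F = q ^ 2)
    (hf : f.totalDegree ≤ q + 1) (x y : σ → F) :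
    (lineRestriction f x y).natDegree < Fintype.card F - 1 := by
  refine (natDegree_lineRestriction_le hf x y).trans_lt (Nat.lt_sub_of_add_lt ?_)
  nlinarith

lemma eval_pow_eq_of_forall_notMem (hq : 2 < q) (hF : Fintype.card F = q ^ 2)
    (hf : f.totalDegree ≤ q + 1) (hW : W ≠ ⊤) (hfixed : ∀ u ∉ W, eval u f ^ q = eval u f)
    (x : σ → F) : eval x f ^ q = eval x f := by
  by_cases hx : x ∈ W
  · obtain ⟨d, hd⟩ := SetLike.exists_not_mem_of_ne_top W hW rfl
    have hdeg := natDegree_lineRestriction_lt_card_sub_one hq hF hf x d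
    have hcoeff := coeff_pow_eq_coeff_mul hF hdeg (fun t ht => ?_) (k := 0) (by omega) (by omega)
    · rwa [mul_zero, coeff_zero_lineRestriction] at hcoeff
    · rw [eval_lineRestriction]
      exact hfixed _ fun h => hd ((W.smul_mem_iff ht).1 ((W.add_mem_iff_right hx).1 h))
  · exact hfixed x hx

theorem differential_pow_eq_differential [Fintype σ] (hq : 2 < q)
    (hF : Fintype.card F = q ^ 2) (hf : f.IsHomogeneous (q + 1))
    (hfixed : ∀ x, eval x f ^ q = eval x f) (x y : σ → F) :
    differential f x y ^ q = differential f y x := by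
  have hcoeff := coeff_pow_eq_coeff_mul hF
    (natDegree_lineRestriction_lt_card_sub_one hq hF hf.totalDegree_le x y)
    (fun t _ => by rw [eval_lineRestriction, hfixed]) (k := 1)
    (by rw [hF]; exact Nat.lt_sub_of_add_lt (by nlinarith))
    (by rw [hF]; exact Nat.lt_sub_of_add_lt (by nlinarith))
  rwa [mul_one, coeff_one_lineRestriction, coeff_lineRestriction_eq_differential hf] at hcoeff

end FixedValues

section PolarMatrix

variable {F σ : Type*} [Field F] [Fintype σ] [DecidableEq σ] {q : ℕ} {f : MvPolynomial σ F}

/-- The matrix of the form `(x, y) ↦ differential f y x`, which is sesquilinear when the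
differentials are Hermitian. -/
noncomputable def polarMatrix (f : MvPolynomial σ F) : Matrix σ σ F :=
  Matrix.of fun i j => differential f (Pi.single j 1) (Pi.single i 1)

variable (hherm : ∀ x y, differential f x y ^ q = differential f y x)
include hherm

lemma transpose_polarMatrix : (polarMatrix f).transpose = (polarMatrix f).map (· ^ q) := by
  ext i j
  exact (hherm _ _).symm

variable [Fintype F]

lemma differential_eq_dotProduct_polarMatrix (hF : Fintype.card F = q ^ 2) (x y : σ → F) :
    differential f x y = y ⬝ᵥ (polarMatrix f).mulVec (fun j => x j ^ q) := by
  have hlinear : ∀ (φ : Dual F (σ → F)) (z : σ → F), φ z = ∑ i, z i * φ (Pi.single i 1) :=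
    fun φ z => by
      conv_lhs => rw [pi_eq_sum_univ' z]
      simp only [map_sum, map_smul, smul_eq_mul]
  rw [hlinear]
  refine Finset.sum_congr rfl fun i _ => congrArg (y i * ·) ?_
  rw [← hherm, hlinear, ← conj_apply hF, map_sum]
  refine Finset.sum_congr rfl fun j _ => ?_
  rw [map_mul, conj_apply, conj_apply, hherm, mul_comm]
  rfl

lemma isUnit_det_polarMatrix (hF : Fintype.card F = q ^ 2)
    (hnondeg : ∀ x, differential f x = 0 → x = 0) : IsUnit (polarMatrix f).det := by
  rw [isUnit_iff_ne_zero]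
  intro hdet
  obtain ⟨z, hz, hMz⟩ := Matrix.exists_mulVec_eq_zero_iff.2 hdet
  have hconj : (fun j => (conj hF (z j)) ^ q) = z := funext fun j => conj_conj hF (z j)
  refine hz (hconj ▸ ?_)
  have hzero := hnondeg (fun j => conj hF (z j)) <| LinearMap.ext fun y => by
    rw [differential_eq_dotProduct_polarMatrix hherm hF, hconj, hMz, dotProduct_zero]
    rfl
  funext j
  have : conj hF (z j) = 0 := congrFun hzero j
  rw [this, Pi.zero_apply, ← conj_apply hF, map_zero]

end PolarMatrix

namespace IsGeneratorFlag

variable {F σ : Type*} [Field F] [Fintype F] [Fintype σ] {q : ℕ} {f : MvPolynomial σ F}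
  {E W : Submodule F (σ → F)} (hG : IsGeneratorFlag q f E W)
include hG

/- A vector `x` in the radical is orthogonal to `E`, so it lies in `W`. It is also a zero of `f`, so
it lies in `E`, where the differential is injective. -/
lemma eq_zero_of_differential_eq_zero {κ : F} (hκ : κ ≠ 0)
    (hherm : ∀ x y, differential (κ • f) x y ^ q = differential (κ • f) y x) {x : σ → F}
    (hx : differential (κ • f) x = 0) : x = 0 := by
  have hq : q ≠ 0 := by
    have := hG.two_lt
    omega
  have hker : ∀ a, differential f a x = 0 := fun a => by
    have h := hherm x a
    rw [hx, LinearMap.zero_apply, zero_pow hq, differential_smul, LinearMap.smul_apply,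
      smul_eq_mul] at h
    exact (mul_eq_zero.1 h.symm).resolve_left hκ
  have hxW : x ∈ W := by
    by_contra h
    obtain ⟨a, -, ha⟩ := hG.exists_differential_ne_zero h
    exact ha (hker a)
  have hfx : eval x f = 0 := by
    have h := differential_self hG.isHomogeneous x
    rwa [hker, Nat.cast_succ, natCast_eq_zero_of_card hG.card_field, zero_add, one_mul,
      eq_comm] at h
  have hdf : differential f x = 0 := by
    rw [differential_smul] at hx
    exact (smul_eq_zero.1 hx).resolve_left hκ
  refine hG.bijOn_differential.injOn ((hG.eval_eq_zero_iff x hxW).1 hfx) E.zero_mem ?_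
  simpa [hdf, hq] using (differential_smul_point hG.isHomogeneous 0 (0 : σ → F)).symm

theorem exists_isUnit_det_eval_eq [DecidableEq σ] :
    ∃ (κ : F) (M : Matrix σ σ F), κ ≠ 0 ∧ IsUnit M.det ∧ M.transpose = M.map (· ^ q) ∧
      ∀ x, κ * eval x f = x ⬝ᵥ M.mulVec (fun j => x j ^ q) := by
  obtain ⟨κ, hκ, hfixed⟩ := hG.exists_mul_eval_pow_eq
  have hhom : (κ • f).IsHomogeneous (q + 1) := (homogeneousSubmodule σ F (q + 1)).smul_mem κ
    hG.isHomogeneous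
  have hherm : ∀ x y, differential (κ • f) x y ^ q = differential (κ • f) y x :=
    differential_pow_eq_differential hG.two_lt hG.card_field hhom <|
      eval_pow_eq_of_forall_notMem hG.two_lt hG.card_field hhom.totalDegree_le hG.ne_top
        fun u hu => by simpa using hfixed u hu
  refine ⟨κ, polarMatrix (κ • f), hκ, isUnit_det_polarMatrix hherm hG.card_field fun x hx =>
    hG.eq_zero_of_differential_eq_zero hκ hherm hx, transpose_polarMatrix hherm, fun x => ?_⟩
  rw [← differential_eq_dotProduct_polarMatrix hherm hG.card_field, differential_self hhom,
    Nat.cast_succ, natCast_eq_zero_of_card hG.card_field, zero_add, one_mul, smul_eval]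

end IsGeneratorFlag

section Projectivization

open Projectivization
open scoped LinearAlgebra.Projectivization

variable {F V : Type*} [Field F] [AddCommGroup V] [Module F V]

lemma ncard_eq_ncard_rep_mul [Finite V] {Z : Set V} (hzero : 0 ∈ Z)
    (hsmul : ∀ (c : F), ∀ v ∈ Z, c • v ∈ Z) :
    Z.ncard = {P : ℙ F V | P.rep ∈ Z}.ncard * (Nat.card F - 1) + 1 := by
  have hZ : ∀ (c : Fˣ) (v : V), (c : F) • v ∈ Z ↔ v ∈ Z := fun c v =>
    ⟨fun h => by simpa using hsmul (c⁻¹ : Fˣ) _ h, hsmul c v⟩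
  let g : {P : ℙ F V | P.rep ∈ Z} × Fˣ → ↥(Z \ {0}) := fun x =>
    ⟨(x.2 : F) • x.1.1.rep, (hZ _ _).2 x.1.2, smul_ne_zero x.2.ne_zero x.1.1.rep_nonzero⟩
  have hg : g.Bijective := by
    constructor
    · rintro ⟨⟨P, hP⟩, s⟩ ⟨⟨Q, hQ⟩, t⟩ h
      have h : (s : F) • P.rep = (t : F) • Q.rep := congrArg Subtype.val h
      obtain rfl : P = Q := by
        rw [← P.mk_rep, ← Q.mk_rep, mk_eq_mk_iff']
        exact ⟨(s⁻¹ : Fˣ) * t, by rw [mul_smul, ← h, smul_smul, Units.inv_mul, one_smul]⟩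
      rw [Units.ext (smul_left_injective F P.rep_nonzero h)]
    · rintro ⟨v, hvZ, hv⟩
      obtain ⟨a, ha⟩ := exists_smul_eq_mk_rep F v hv
      refine ⟨⟨⟨mk F v hv, ?_⟩, a⁻¹⟩, Subtype.ext ?_⟩
      · have hrep : (mk F v hv).rep ∈ Z := ha ▸ (hZ a v).2 hvZ
        exact hrep
      · change a⁻¹ • (mk F v hv).rep = v
        rw [← ha, inv_smul_smul]
  rw [← Set.ncard_sdiff_singleton_add_one hzero, ← Nat.card_coe_set_eq, ← Nat.card_congr
    (Equiv.ofBijective g hg), Nat.card_prod, Nat.card_coe_set_eq, Nat.card_units]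

end Projectivization

section Hypersurface

variable {F : Type} [Field F] {n d q m : ℕ} {f : MvPolynomial (Fin n) F}
  {W : Submodule F (Fin n → F)}

lemma mem_projPts {P : Projectivization F (Fin n → F)} : P ∈ projPts W ↔ P.rep ∈ W := by
  change P.submodule ≤ W ↔ _
  rw [P.submodule_eq, Submodule.span_singleton_le_iff_mem]

lemma ncard_zeros_eq [Finite F] (hf : f.IsHomogeneous (d + 1)) :
    {v | eval v f = 0}.ncard = (hypersurfacePts f).ncard * (Nat.card F - 1) + 1 :=
  ncard_eq_ncard_rep_mul (by simpa using eval_smul_of_isHomogeneous hf 0 0) fun c v hv => by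
    rw [Set.mem_ofPred_eq] at hv
    simp [eval_smul_of_isHomogeneous hf, hv]

lemma ncard_zeros_mem_eq [Finite F] (hf : f.IsHomogeneous (d + 1)) :
    {v | v ∈ W ∧ eval v f = 0}.ncard =
      (hypersurfacePts f ∩ projPts W).ncard * (Nat.card F - 1) + 1 := by
  have hpts : hypersurfacePts f ∩ projPts W = {P | P.rep ∈ {v | v ∈ W ∧ eval v f = 0}} := by
    ext P
    rw [Set.mem_inter_iff, mem_projPts, and_comm]
    rfl
  rw [hpts]
  refine ncard_eq_ncard_rep_mul ⟨W.zero_mem, by simpa using eval_smul_of_isHomogeneous hf 0 0⟩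
    fun c v hv => ⟨W.smul_mem c hv.1, ?_⟩
  rw [eval_smul_of_isHomogeneous hf, hv.2, mul_zero]

lemma projPts_subset_hypersurfacePts (h : ∀ v ∈ W, eval v f = 0) :
    projPts W ⊆ hypersurfacePts f :=
  fun _ hP => h _ (mem_projPts.1 hP)

lemma geomSum_sq_mul_add_one (hq : 0 < q) (m : ℕ) :
    (∑ i ∈ Finset.range m, q ^ (2 * i)) * (q ^ 2 - 1) + 1 = q ^ (2 * m) := by
  have h := geom_sum_mul_of_one_le (Nat.one_le_pow 2 q hq) m
  simp only [← pow_mul] at h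
  rw [h, Nat.sub_add_cancel (Nat.one_le_pow _ _ hq)]

lemma mul_ncard_zeros_notMem_eq [Fintype F] (hq : 0 < q) (hF : Fintype.card F = q ^ 2)
    {f : MvPolynomial (Fin (2 * m + 1)) F} {W : Submodule F (Fin (2 * m + 1) → F)}
    (hW : finrank F W = m + 1) (hcountW : {v | v ∈ W ∧ eval v f = 0}.ncard = q ^ (2 * m))
    (hcount : {v | eval v f = 0}.ncard = (q ^ (2 * m + 1) + 1) * (q ^ (2 * m) - 1) + 1) :
    q * {v | v ∉ W ∧ eval v f = 0}.ncard = {v | v ∉ W}.ncard := by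
  have hzeros : {v | v ∈ W ∧ eval v f = 0}.ncard + {v | v ∉ W ∧ eval v f = 0}.ncard =
      {v | eval v f = 0}.ncard := by
    rw [← Set.ncard_inter_add_ncard_sdiff_eq_ncard {v | eval v f = 0} W]
    congr 2 <;> ext v <;> simp [and_comm]
  have hall : (W : Set (Fin (2 * m + 1) → F)).ncard + {v | v ∉ W}.ncard = q ^ (4 * m + 2) := by
    rw [show {v | v ∉ W} = (W : Set (Fin (2 * m + 1) → F))ᶜ from rfl, Set.ncard_add_ncard_compl,
      Module.natCard_eq_pow_finrank (K := F), Nat.card_eq_fintype_card, hF,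
      Module.finrank_fin_fun]
    ring
  have hWcard : (W : Set (Fin (2 * m + 1) → F)).ncard = q ^ (2 * m + 2) := by
    rw [← Nat.card_coe_set_eq, SetLike.coe_sort_coe, Module.natCard_eq_pow_finrank (K := F),
      Nat.card_eq_fintype_card, hF, hW]
    ring
  obtain ⟨k, hk⟩ := Nat.exists_eq_add_of_le' (Nat.one_le_pow (2 * m) q hq)
  rw [hcountW, hcount, hk, Nat.add_sub_cancel] at hzeros
  rw [hWcard] at hall
  zify at *
  have h1 : (q : ℤ) ^ (4 * m + 2) = q ^ (2 * m) * (q ^ (2 * m) * q ^ 2) := by ring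
  have h2 : (q : ℤ) ^ (2 * m + 2) = q ^ (2 * m) * q ^ 2 := by ring
  have h3 : (q : ℤ) ^ (2 * m + 1) = q ^ (2 * m) * q := by ring
  rw [h1, h2, hk] at hall
  rw [h3, hk] at hzeros
  linear_combination q * hzeros - hall

lemma exists_isGeneratorFlag_of_ncard [Fintype F] (hm : 2 ≤ m) (hq : 2 < q)
    (hF : Fintype.card F = q ^ 2) {f : MvPolynomial (Fin (2 * m + 1)) F}
    (hf : f.IsHomogeneous (q + 1))
    (hnot : ¬ ∃ W : Submodule F (Fin (2 * m + 1) → F), finrank F W = m + 1 ∧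
      projPts W ⊆ hypersurfacePts f)
    (hcard : (hypersurfacePts f).ncard =
      (q ^ (2 * m + 1) + 1) * ∑ i ∈ Finset.range m, q ^ (2 * i))
    {W : Submodule F (Fin (2 * m + 1) → F)} (hW : finrank F W = m + 1)
    (hcardW : (hypersurfacePts f ∩ projPts W).ncard = ∑ i ∈ Finset.range m, q ^ (2 * i)) :
    ∃ E, IsGeneratorFlag q f E W := by
  have hgeom := geomSum_sq_mul_add_one (by omega : 0 < q) m
  have hcountW : {v | v ∈ W ∧ eval v f = 0}.ncard = q ^ (2 * m) := by
    rw [ncard_zeros_mem_eq hf, hcardW, Nat.card_eq_fintype_card, hF, hgeom]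
  have hcount : {v | eval v f = 0}.ncard =
      (q ^ (2 * m + 1) + 1) * (q ^ (2 * m) - 1) + 1 := by
    rw [ncard_zeros_eq hf, hcard, Nat.card_eq_fintype_card, hF, mul_assoc, ← hgeom,
      Nat.add_sub_cancel]
  refine exists_isGeneratorFlag hq hF hf (by rw [hW, Fintype.card_fin]; ring) (by omega) ?_
    (mul_ncard_zeros_notMem_eq (by omega) hF hW hcountW hcount) fun W' hW' => ?_
  · rw [hcountW, Module.natCard_eq_pow_finrank (K := F), Nat.card_eq_fintype_card, hF, hW]
    ring
  · by_contra! h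
    exact hnot ⟨W', hW'.trans hW, projPts_subset_hypersurfacePts h⟩

lemma IsGeneratorFlag.isNonsingularHermitian [Fintype F] {E : Submodule F (Fin n → F)}
    (hG : IsGeneratorFlag q f E W) : IsNonsingularHermitian q (hypersurfacePts f) := by
  obtain ⟨κ, M, hκ, hdet, htranspose, heval⟩ := hG.exists_isUnit_det_eval_eq
  refine ⟨M, hdet, htranspose, Set.ext fun P => ?_⟩
  have hsum : ∑ i, ∑ j, P.rep i * M i j * P.rep j ^ q = κ * eval P.rep f := by
    simp only [heval, dotProduct, Matrix.mulVec, Finset.mul_sum, mul_assoc]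
  change eval P.rep f = 0 ↔ ∑ i, ∑ j, P.rep i * M i j * P.rep j ^ q = 0
  rw [hsum, mul_eq_zero_iff_left hκ]

end Hypersurface

end HermitianVariety

theorem stmt_1_general (m q : ℕ) (hm : 2 ≤ m) (hq2 : 2 < q) (F : Type) [Field F] [Fintype F]
    (hcardF : Fintype.card F = q ^ 2) (f : MvPolynomial (Fin (2 * m + 1)) F)
    (hfdeg : f.IsHomogeneous (q + 1)) (S : Set (Projectivization F (Fin (2 * m + 1) → F)))
    (hS : S = hypersurfacePts f)
    (hnot : ¬ ∃ W : Submodule F (Fin (2 * m + 1) → F), finrank F W = m + 1 ∧ projPts W ⊆ S)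
    (hcardS : S.ncard = (q ^ (2 * m + 1) + 1) * ∑ i ∈ Finset.range m, q ^ (2 * i))
    (hW : ∃ W : Submodule F (Fin (2 * m + 1) → F), finrank F W = m + 1 ∧
      (S ∩ projPts W).ncard = ∑ i ∈ Finset.range m, q ^ (2 * i)) :
    IsNonsingularHermitian q S := by
  subst hS
  obtain ⟨W, hfinrank, hcardW⟩ := hW
  obtain ⟨E, hG⟩ := HermitianVariety.exists_isGeneratorFlag_of_ncard hm hq2 hcardF hfdeg hnot
    hcardS hfinrank hcardW
  exact hG.isNonsingularHermitian

/-- If `q > 2` is a prime power and `S` is a hypersurface of `PG(6,q²)` of degree `q+1`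
defined over `GF(q²)`, containing no solid, with `q^11+q^9+q^7+q^4+q^2+1` rational points,
and some solid meets `S` in exactly `q^4+q^2+1` points, then `S` is a non-singular
Hermitian variety `H(6,q²)`. -/
theorem stmt_1 (q : ℕ) (hq : ∃ p k : ℕ, p.Prime ∧ 0 < k ∧ q = p ^ k) (hq2 : 2 < q)
    (F : Type) [Field F] [Fintype F] (hcardF : Fintype.card F = q ^ 2)
    (f : MvPolynomial (Fin 7) F) (hf0 : f ≠ 0) (hfdeg : f.IsHomogeneous (q + 1))
    (S : Set (Projectivization F (Fin 7 → F))) (hS : S = hypersurfacePts f)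
    (hnosolid : ¬ ∃ W : Submodule F (Fin 7 → F), Module.finrank F W = 4 ∧ projPts W ⊆ S)
    (hcardS : S.ncard = q ^ 11 + q ^ 9 + q ^ 7 + q ^ 4 + q ^ 2 + 1)
    (hsolid : ∃ W : Submodule F (Fin 7 → F), Module.finrank F W = 4 ∧
      (S ∩ projPts W).ncard = q ^ 4 + q ^ 2 + 1) :
    IsNonsingularHermitian q S := by
  subst hS
  refine stmt_1_general 3 q (by norm_num) hq2 F hcardF f hfdeg _ rfl hnosolid (hcardS.trans ?_) ?_
  · simp only [Finset.sum_range_succ, Finset.sum_range_zero]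
    ring
  · obtain ⟨W, hW, hcardW⟩ := hsolid
    refine ⟨W, hW, hcardW.trans ?_⟩
    simp only [Finset.sum_range_succ, Finset.sum_range_zero]
    ring
end
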